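/- The absolute values of the coefficients of the chromatic polynomial of a finite simple graph form a log-concave sequence: if G has n vertices, P_G(λ) = Σ_{i=0}^{n} c_{n−i} λ^{n−i}, and h_i = |c_{n−i}|, then h_{i−1} · h_{i+1} ≤ h_i² for all i with 0 < i < n. -/

import Mathlib

open Polynomial

/-- The number of proper colorings of the finite simple graph `G` with `k` colors. -/
def SimpleGraph.numColorings {V : Type*} [Fintype V] [DecidableEq V]
    (G : SimpleGraph V) [DecidableRel G.Adj] (k : ℕ) : ℕ :=
  Fintype.card {f : V → Fin k // ∀ a b, G.Adj a b → f a ≠ f b}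

/-!
The unsigned coefficients of the chromatic polynomial are the numbers `∑ |μ(∅, F)|`, over the flats
`F` of fixed rank of the graphic matroid. Splitting them according to whether `F` contains a given
edge reduces their log-concavity to that of the coefficients of the reduced characteristic
polynomial. By Weisner's theorem, the latter are the mixed degrees `α ^ j β ^ k` of two nef divisors
on the Bergman fan of the matroid, following Adiprasito, Huh and Katz. Their log-concavity is thus a
case of the Alexandrov–Fenchel inequality, which is a limit of the Hodge index theorem for mixed
degrees of ample divisors. As in Bochner-type proofs of Alexandrov–Fenchel, the Hodge index theorem
for a fan is deduced from those for the stars of its rays, through connectedness of its links; the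
induction starts with the fans of dimension two, where the matroid axioms give it directly.
-/

/-! ### Symmetric bilinear forms -/

section SymmetricOperator

open scoped InnerProductSpace

variable {E : Type*} [NormedAddCommGroup E] [InnerProductSpace ℝ E] [FiniteDimensional ℝ E]

/- An eigenvalue `μ` satisfies `μ ≤ 1` and `μ ≤ μ ^ 2`, so it is either `1` or nonpositive. -/
theorem inner_map_self_nonpos_of_le_sq {T : E →ₗ[ℝ] E} (hT : T.IsSymmetric)
    (hle : ∀ x, ⟪T x, x⟫_ℝ ≤ ⟪x, x⟫_ℝ) (hsq : ∀ x, ⟪T x, x⟫_ℝ ≤ ⟪T x, T x⟫_ℝ)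
    {x : E} (hx : ∀ v, T v = v → ⟪v, x⟫_ℝ = 0) : ⟪T x, x⟫_ℝ ≤ 0 := by
  set v := hT.eigenvectorBasis rfl
  set μ := hT.eigenvalues rfl
  have apply_v (k) : T (v k) = μ k • v k := hT.apply_eigenvectorBasis rfl k
  have inner_v (k) : ⟪v k, v k⟫_ℝ = 1 := by
    rw [real_inner_self_eq_norm_sq, v.orthonormal.1 k, one_pow]
  have expansion : ⟪T x, x⟫_ℝ = ∑ k, μ k * ⟪v k, x⟫_ℝ ^ 2 := by
    rw [← v.sum_inner_mul_inner (T x) x]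
    refine Finset.sum_congr rfl fun k _ => ?_
    rw [hT x (v k), apply_v, inner_smul_right, real_inner_comm x]
    ring
  rw [expansion]
  refine Finset.sum_nonpos fun k _ => ?_
  have le_one : μ k ≤ 1 := by
    simpa [apply_v, inner_smul_left, inner_v] using hle (v k)
  have le_sq : μ k ≤ μ k * μ k := by
    have := hsq (v k)
    rwa [apply_v, inner_smul_left, inner_smul_left, inner_smul_right, inner_v, mul_one, mul_one]
      at this
  rcases le_one.eq_or_lt with h | h
  · simp [hx (v k) (by rw [apply_v, h, one_smul])]
  · exact mul_nonpos_of_nonpos_of_nonneg (by nlinarith) (sq_nonneg _)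

end SymmetricOperator

section PerronFrobenius

open Matrix

variable {ι : Type*} {A : Matrix ι ι ℝ} {c p : ι → ℝ}

theorem weighted_sq_sub_nonneg (hoff : ∀ i j, i ≠ j → 0 ≤ A i j) (hc : ∀ i, 0 < c i)
    (x : ι → ℝ) (i j : ι) : 0 ≤ A i j * c i * c j * (x i / c i - x j / c j) ^ 2 := by
  rcases eq_or_ne i j with rfl | hij
  · simp
  · have := hoff i j hij
    have := hc i
    have := hc j
    positivity

variable [Fintype ι]

theorem sum_mul_sq_sub_dotProduct_mulVec (hA : A.IsSymm) (hc : ∀ i, c i ≠ 0)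
    (hAc : A *ᵥ c = p) (x : ι → ℝ) :
    ∑ i, p i / c i * x i ^ 2 - x ⬝ᵥ A *ᵥ x =
      (∑ i, ∑ j, A i j * c i * c j * (x i / c i - x j / c j) ^ 2) / 2 := by
  have row : ∑ i, ∑ j, A i j * c j * (x i ^ 2 / c i) = ∑ i, p i / c i * x i ^ 2 := by
    refine Finset.sum_congr rfl fun i _ => ?_
    rw [← Finset.sum_mul, show ∑ j, A i j * c j = p i from congrFun hAc i]
    ring
  have column : ∑ i, ∑ j, A i j * c i * (x j ^ 2 / c j) = ∑ i, p i / c i * x i ^ 2 := by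
    rw [Finset.sum_comm, ← row]
    simp only [hA.apply]
  have expand : ∑ i, ∑ j, A i j * c i * c j * (x i / c i - x j / c j) ^ 2 =
      ∑ i, ∑ j, A i j * c j * (x i ^ 2 / c i) + ∑ i, ∑ j, A i j * c i * (x j ^ 2 / c j) -
        2 * x ⬝ᵥ A *ᵥ x := by
    simp only [dotProduct, mulVec, Finset.mul_sum, ← Finset.sum_add_distrib,
      ← Finset.sum_sub_distrib]
    refine Finset.sum_congr rfl fun i _ => Finset.sum_congr rfl fun j _ => ?_
    field_simp [hc i, hc j]
    ring
  rw [expand, row, column]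
  ring

theorem dotProduct_mulVec_le (hA : A.IsSymm) (hoff : ∀ i j, i ≠ j → 0 ≤ A i j)
    (hc : ∀ i, 0 < c i) (hAc : A *ᵥ c = p) (x : ι → ℝ) :
    x ⬝ᵥ A *ᵥ x ≤ ∑ i, p i / c i * x i ^ 2 := by
  have nonneg := Finset.sum_nonneg fun i (_ : i ∈ Finset.univ) =>
    Finset.sum_nonneg fun j (_ : j ∈ Finset.univ) => weighted_sq_sub_nonneg hoff hc x i j
  linarith [sum_mul_sq_sub_dotProduct_mulVec hA (fun i => (hc i).ne') hAc x]

theorem div_eq_div_of_dotProduct_mulVec_eq (hA : A.IsSymm) (hoff : ∀ i j, i ≠ j → 0 ≤ A i j)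
    (hc : ∀ i, 0 < c i) (hAc : A *ᵥ c = p)
    (hconn : ∀ g : ι → ℝ, (∀ i j, i ≠ j → 0 < A i j → g i = g j) → ∀ i j, g i = g j)
    {x : ι → ℝ} (hx : x ⬝ᵥ A *ᵥ x = ∑ i, p i / c i * x i ^ 2) (i j : ι) :
    x i / c i = x j / c j := by
  have nonneg := weighted_sq_sub_nonneg hoff hc x
  have sum_zero : ∑ i, ∑ j, A i j * c i * c j * (x i / c i - x j / c j) ^ 2 = 0 := by
    linarith [sum_mul_sq_sub_dotProduct_mulVec hA (fun i => (hc i).ne') hAc x]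
  refine hconn (fun i => x i / c i) (fun i j _ hij => ?_) i j
  have row_zero := (Finset.sum_eq_zero_iff_of_nonneg fun i _ =>
    Finset.sum_nonneg fun j _ => nonneg i j).1 sum_zero i (Finset.mem_univ i)
  have term_zero := (Finset.sum_eq_zero_iff_of_nonneg fun j _ => nonneg i j).1 row_zero j
    (Finset.mem_univ j)
  have weight_pos : 0 < A i j * c i * c j := mul_pos (mul_pos hij (hc i)) (hc j)
  simpa [weight_pos.ne', sub_eq_zero] using term_zero

theorem toEuclideanLin_diagonal_mul_mul_apply [DecidableEq ι] (A : Matrix ι ι ℝ) (r : ι → ℝ)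
    (v : EuclideanSpace ℝ ι) (i : ι) :
    toEuclideanLin (diagonal r⁻¹ * A * diagonal r⁻¹) v i = (A *ᵥ fun j => v j / r j) i / r i := by
  simp only [toLpLin_apply, mulVec, dotProduct, mul_diagonal, diagonal_mul, Pi.inv_apply,
    div_eq_inv_mul, Finset.mul_sum, mul_assoc]

theorem isSymmetric_toEuclideanLin_diagonal_mul_mul [DecidableEq ι] (hA : A.IsSymm) (r : ι → ℝ) :
    (toEuclideanLin (diagonal r⁻¹ * A * diagonal r⁻¹)).IsSymmetric := by
  refine isSymmetric_toEuclideanLin_iff.2 ?_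
  ext i j
  simp [diagonal_mul, mul_diagonal, hA.apply i j]
  ring

theorem dotProduct_mulVec_nonpos_of_le_sq {d : ι → ℝ} (hA : A.IsSymm) (hd : ∀ i, 0 < d i)
    (hle : ∀ x, x ⬝ᵥ A *ᵥ x ≤ ∑ i, d i * x i ^ 2)
    (hsq : ∀ x, x ⬝ᵥ A *ᵥ x ≤ ∑ i, (A *ᵥ x) i ^ 2 / d i)
    {t : ι → ℝ} (ht : ∀ x, A *ᵥ x = d * x → ∑ i, d i * x i * t i = 0) : t ⬝ᵥ A *ᵥ t ≤ 0 := by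
  classical
  set r : ι → ℝ := fun i => √(d i)
  have r_ne (i) : r i ≠ 0 := (Real.sqrt_pos.2 (hd i)).ne'
  have r_sq (i) : r i ^ 2 = d i := Real.sq_sqrt (hd i).le
  set T := toEuclideanLin (diagonal r⁻¹ * A * diagonal r⁻¹)
  have T_apply (v : EuclideanSpace ℝ ι) (i) : T v i = (A *ᵥ fun j => v j / r j) i / r i :=
    toEuclideanLin_diagonal_mul_mul_apply A r v i
  have inner_T (v : EuclideanSpace ℝ ι) :
      inner ℝ (T v) v = (fun j => v j / r j) ⬝ᵥ A *ᵥ fun j => v j / r j := by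
    simp only [PiLp.inner_apply, T_apply, dotProduct]
    exact Finset.sum_congr rfl fun i _ => (mul_div_left_comm ..).trans (mul_comm ..)
  set y : EuclideanSpace ℝ ι := WithLp.toLp 2 fun i => r i * t i
  have y_div_r : (fun i => y i / r i) = t := funext fun i => mul_div_cancel_left₀ _ (r_ne i)
  have key : inner ℝ (T y) y ≤ 0 := by
    refine inner_map_self_nonpos_of_le_sq
      (isSymmetric_toEuclideanLin_diagonal_mul_mul hA r) (fun v => ?_) (fun v => ?_) fun v hv => ?_
    · rw [inner_T, PiLp.inner_apply]
      refine (hle _).trans_eq (Finset.sum_congr rfl fun i _ => ?_)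
      rw [div_pow, r_sq, mul_div_cancel₀ _ (hd i).ne']
      exact pow_two _
    · rw [inner_T, PiLp.inner_apply]
      refine (hsq _).trans_eq (Finset.sum_congr rfl fun i _ => ?_)
      rw [T_apply, ← r_sq, ← div_pow]
      exact pow_two _
    · rw [← ht (fun i => v i / r i) (funext fun i => ?_), PiLp.inner_apply]
      · refine Finset.sum_congr rfl fun i _ => ?_
        have := r_ne i
        simp only [y, ← r_sq, RCLike.inner_apply, conj_trivial]
        field_simp
      · have := r_ne i
        have apply_i := T_apply v i
        rw [hv, eq_div_iff this] at apply_i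
        rw [← apply_i, Pi.mul_apply, ← r_sq]
        field_simp
  rwa [inner_T, y_div_r] at key

/- By Perron–Frobenius `A ≤ diagonal (p / c)`, with equality only on the line of `c`. -/
theorem dotProduct_mulVec_nonpos_of_bochner (hA : A.IsSymm) (hoff : ∀ i j, i ≠ j → 0 ≤ A i j)
    (hc : ∀ i, 0 < c i) (hp : ∀ i, 0 < p i) (hAc : A *ᵥ c = p)
    (hconn : ∀ g : ι → ℝ, (∀ i j, i ≠ j → 0 < A i j → g i = g j) → ∀ i j, g i = g j)
    (hbochner : ∀ t, t ⬝ᵥ A *ᵥ t ≤ ∑ i, c i / p i * (A *ᵥ t) i ^ 2)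
    {t : ι → ℝ} (ht : t ⬝ᵥ p = 0) : t ⬝ᵥ A *ᵥ t ≤ 0 := by
  refine dotProduct_mulVec_nonpos_of_le_sq (d := p / c) hA (fun i => div_pos (hp i) (hc i))
    (dotProduct_mulVec_le hA hoff hc hAc) (fun x => ?_) fun x hx => ?_
  · refine (hbochner x).trans_eq (Finset.sum_congr rfl fun i _ => ?_)
    rw [Pi.div_apply, div_div_eq_mul_div, div_mul_eq_mul_div, mul_comm]
  · rcases isEmpty_or_nonempty ι with _ | ⟨⟨i₀⟩⟩
    · simp
    have proportional := div_eq_div_of_dotProduct_mulVec_eq hA hoff hc hAc hconn (x := x) <| by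
      rw [hx]
      exact Finset.sum_congr rfl fun i _ => by simp only [Pi.mul_apply, Pi.div_apply]; ring
    calc ∑ i, (p / c) i * x i * t i = ∑ i, x i₀ / c i₀ * (t i * p i) := by
          refine Finset.sum_congr rfl fun i _ => ?_
          rw [← proportional i i₀, Pi.div_apply]
          ring
      _ = 0 := by rw [← Finset.mul_sum, ← dotProduct, ht, mul_zero]

end PerronFrobenius

theorem mul_le_sq_of_quadratic_nonpos {a b c x y : ℝ}
    (h : y ^ 2 * a - 2 * y * x * b + x ^ 2 * c ≤ 0) (hc : 0 < c) (hy : y ≠ 0) : a * c ≤ b ^ 2 := by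
  have hy2 : 0 < y ^ 2 := by positivity
  have : y ^ 2 * (a * c - b ^ 2) ≤ 0 := by
    nlinarith [sq_nonneg (x * c - y * b), mul_le_mul_of_nonneg_right h hc.le]
  nlinarith

/-! ### Balanced fans and the Hodge index theorem -/

section Link

variable {S : Type*} [Fintype S] [DecidableEq S]

open Classical in
/-- The vertices of the link of `τ` in the family of faces `Δ`. -/
noncomputable def linkVertices (Δ : Set (Finset S)) (τ : Finset S) : Finset S :=
  {F | F ∉ τ ∧ insert F τ ∈ Δ}

theorem mem_linkVertices {Δ : Set (Finset S)} {τ : Finset S} {F : S} :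
    F ∈ linkVertices Δ τ ↔ F ∉ τ ∧ insert F τ ∈ Δ := by
  simp [linkVertices]

end Link

/-- A balanced simplicial fan of dimension `dim`, presented combinatorially. A face stands for the
cone spanned by the rays in it, a function on `S` is a piecewise linear function recorded by its
values on the ray generators, and `linear` consists of the globally linear ones. All maximal cones
have weight one. The faces need only be order-convex, so that a fan with a lineality space can be
described by the faces containing a fixed set. -/
structure BalancedFan (S : Type*) [Fintype S] [DecidableEq S] where
  faces : Set (Finset S)
  dim : ℕ
  linear : Submodule ℝ (S → ℝ)
  ordConnected : faces.OrdConnected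
  exists_linear_eqOn : ∀ τ ∈ faces, ∀ t : S → ℝ, ∃ l ∈ linear, ∀ F ∈ τ, l F = t F
  balanced : ∀ τ ∈ faces, τ.card + 1 = dim → ∀ l ∈ linear, (∀ F ∈ τ, l F = 0) →
    ∑ F ∈ linkVertices faces τ, l F = 0

namespace BalancedFan

variable {S : Type*} [Fintype S] [DecidableEq S] (B : BalancedFan S)

/-- The vertices of the link of a face. -/
noncomputable abbrev link (τ : Finset S) : Finset S := linkVertices B.faces τ

variable {B} {τ : Finset S} {F G : S}

theorem insert_mem_faces (hF : F ∈ B.link τ) : insert F τ ∈ B.faces := (mem_linkVertices.1 hF).2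

theorem card_insert_of_mem_link (hF : F ∈ B.link τ) : (insert F τ).card = τ.card + 1 :=
  Finset.card_insert_of_notMem (mem_linkVertices.1 hF).1

theorem ne_of_mem_link (hF : F ∈ B.link τ) (hG : G ∈ τ) : F ≠ G := by
  rintro rfl
  exact (mem_linkVertices.1 hF).1 hG

theorem mem_link_swap (hτ : τ ∈ B.faces) (hF : F ∈ B.link τ) (hG : G ∈ B.link (insert F τ)) :
    G ∈ B.link τ ∧ F ∈ B.link (insert G τ) := by
  have hFG : F ≠ G := (ne_of_mem_link hG (Finset.mem_insert_self F τ)).symm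
  have hFτ : F ∉ τ := (mem_linkVertices.1 hF).1
  have hGτ : G ∉ τ := fun h => (mem_linkVertices.1 hG).1 (Finset.mem_insert_of_mem h)
  have hface : insert F (insert G τ) ∈ B.faces := Finset.insert_comm G F τ ▸ insert_mem_faces hG
  refine ⟨mem_linkVertices.2 ⟨hGτ, ?_⟩, mem_linkVertices.2 ⟨?_, hface⟩⟩
  · exact B.ordConnected.out hτ hface ⟨Finset.subset_insert G τ, Finset.subset_insert F _⟩
  · simp [hFG, hFτ]

theorem sum_link_comm (hτ : τ ∈ B.faces) (f : S → S → ℝ) :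
    ∑ F ∈ B.link τ, ∑ G ∈ B.link (insert F τ), f F G =
      ∑ G ∈ B.link τ, ∑ F ∈ B.link (insert G τ), f F G :=
  Finset.sum_comm' fun _ _ => ⟨fun ⟨hF, hG⟩ => (mem_link_swap hτ hF hG).symm,
    fun ⟨hF, hG⟩ => mem_link_swap hτ hG hF⟩

theorem exists_reduction (hτ : τ ∈ B.faces) : ∃ R : (S → ℝ) →ₗ[ℝ] S → ℝ,
    ∀ t, t - R t ∈ B.linear ∧ ∀ F ∈ τ, R t F = 0 := by
  choose b b_mem b_apply using fun F => B.exists_linear_eqOn τ hτ (Pi.single F 1)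
  refine ⟨LinearMap.id - ∑ F ∈ τ, (LinearMap.proj F).smulRight (b F), fun t => ⟨?_, ?_⟩⟩
  · simpa using Submodule.sum_mem _ fun F _ => B.linear.smul_mem (t F) (b_mem F)
  · intro F hF
    have : ∑ G ∈ τ, t G * b G F = t F := by
      rw [Finset.sum_eq_single F (fun G _ hGF => by simp [b_apply G F hF, hGF.symm])
        fun h => absurd hF h, b_apply F F hF, Pi.single_eq_same, mul_one]
    simp [this]

variable (B) in
open Classical in
/-- A linear choice of representatives modulo `B.linear` that vanish on the face `τ`. -/
noncomputable def reduce (τ : Finset S) : (S → ℝ) →ₗ[ℝ] S → ℝ :=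
  if hτ : τ ∈ B.faces then (exists_reduction hτ).choose else 0

theorem sub_reduce_mem (hτ : τ ∈ B.faces) (t : S → ℝ) : t - B.reduce τ t ∈ B.linear := by
  rw [reduce, dif_pos hτ]
  exact ((exists_reduction hτ).choose_spec t).1

theorem reduce_apply_eq_zero (hτ : τ ∈ B.faces) (t : S → ℝ) (hF : F ∈ τ) : B.reduce τ t F = 0 := by
  rw [reduce, dif_pos hτ]
  exact ((exists_reduction hτ).choose_spec t).2 F hF

variable (B) in
/-- The mixed degree of a list of divisor classes on the star of `τ`: the intersection number of
the corresponding piecewise linear functions when the length of the list is `B.dim - τ.card`. -/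
noncomputable def mixedDegree : List (S → ℝ) → Finset S → ℝ
  | [], _ => 1
  | t :: ts, τ => ∑ F ∈ B.link τ, B.reduce τ t F * mixedDegree ts (insert F τ)

variable {t s u : S → ℝ} {ts : List (S → ℝ)}

theorem mixedDegree_cons (t : S → ℝ) (ts : List (S → ℝ)) (τ : Finset S) :
    B.mixedDegree (t :: ts) τ =
      ∑ F ∈ B.link τ, B.reduce τ t F * B.mixedDegree ts (insert F τ) := rfl

theorem isLinearMap_mixedDegree_cons (ts : List (S → ℝ)) (τ : Finset S) :
    IsLinearMap ℝ fun t => B.mixedDegree (t :: ts) τ where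
  map_add s t := by simp only [mixedDegree_cons, map_add, Pi.add_apply, add_mul,
    Finset.sum_add_distrib]
  map_smul a t := by simp only [mixedDegree_cons, map_smul, Pi.smul_apply, smul_eq_mul,
    Finset.mul_sum, mul_assoc]

theorem continuous_mixedDegree {X : Type*} [TopologicalSpace X] (fs : List (X → S → ℝ))
    (hfs : ∀ f ∈ fs, Continuous f) (τ : Finset S) :
    Continuous fun x => B.mixedDegree (fs.map fun f => f x) τ := by
  induction fs generalizing τ with
  | nil => exact continuous_const
  | cons f fs ih =>
    refine continuous_finsetSum _ fun F _ => .mul ?_ (ih (fun g hg => hfs g (by simp [hg])) _)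
    exact (continuous_apply F).comp
      ((LinearMap.continuous_of_finiteDimensional _).comp (hfs f (by simp)))

variable (B) in
/-- The function `B.mixedDegree ts` is a Minkowski weight, that is, it satisfies the balancing
condition at each face of the relevant codimension. -/
def IsMinkowskiWeight (ts : List (S → ℝ)) : Prop :=
  ∀ τ ∈ B.faces, τ.card + ts.length + 1 = B.dim → ∀ l ∈ B.linear, (∀ F ∈ τ, l F = 0) →
    ∑ F ∈ B.link τ, l F * B.mixedDegree ts (insert F τ) = 0

namespace IsMinkowskiWeight

theorem mixedDegree_cons_eq_sum (h : B.IsMinkowskiWeight ts) (hτ : τ ∈ B.faces)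
    (hcard : τ.card + ts.length + 1 = B.dim) (hts : t - s ∈ B.linear) (hs : ∀ F ∈ τ, s F = 0) :
    B.mixedDegree (t :: ts) τ = ∑ F ∈ B.link τ, s F * B.mixedDegree ts (insert F τ) := by
  have mem_linear : B.reduce τ t - s ∈ B.linear := by
    simpa using B.linear.sub_mem hts (sub_reduce_mem hτ t)
  have balancing := h τ hτ hcard _ mem_linear fun F hF => by
    simp [reduce_apply_eq_zero hτ t hF, hs F hF]
  rw [mixedDegree_cons, ← sub_eq_zero, ← Finset.sum_sub_distrib, ← balancing]
  exact Finset.sum_congr rfl fun F _ => (sub_mul _ _ _).symm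

theorem mixedDegree_cons_congr (h : B.IsMinkowskiWeight ts) (hτ : τ ∈ B.faces)
    (hcard : τ.card + ts.length + 1 = B.dim) (hts : t - s ∈ B.linear) :
    B.mixedDegree (t :: ts) τ = B.mixedDegree (s :: ts) τ :=
  h.mixedDegree_cons_eq_sum hτ hcard (by simpa using B.linear.add_mem hts (sub_reduce_mem hτ s))
    fun _ hF => reduce_apply_eq_zero hτ s hF

/- For each `F` in the link choose a linear `b F` that is `1` at `F` and vanishes on `τ`. Then
`s - s F • b F` represents `s` on the star of `insert F τ`. -/
theorem sum_mul_mixedDegree_comm (h : B.IsMinkowskiWeight ts) (hτ : τ ∈ B.faces)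
    (hcard : τ.card + ts.length + 2 = B.dim) (hu : ∀ F ∈ τ, u F = 0) (hs : ∀ F ∈ τ, s F = 0) :
    ∑ F ∈ B.link τ, u F * B.mixedDegree (s :: ts) (insert F τ) =
      ∑ F ∈ B.link τ, s F * B.mixedDegree (u :: ts) (insert F τ) := by
  choose! b b_mem b_apply using fun F (hF : F ∈ B.link τ) =>
    B.exists_linear_eqOn _ (insert_mem_faces hF) (Pi.single F 1)
  have expand (u s : S → ℝ) (hs : ∀ F ∈ τ, s F = 0) :
      ∑ F ∈ B.link τ, u F * B.mixedDegree (s :: ts) (insert F τ) =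
      ∑ F ∈ B.link τ, ∑ G ∈ B.link (insert F τ),
        u F * s G * B.mixedDegree ts (insert G (insert F τ)) -
      ∑ F ∈ B.link τ, u F * s F * ∑ G ∈ B.link (insert F τ),
        b F G * B.mixedDegree ts (insert G (insert F τ)) := by
    rw [← Finset.sum_sub_distrib]
    refine Finset.sum_congr rfl fun F hF => ?_
    rw [h.mixedDegree_cons_eq_sum (s := s - s F • b F) (insert_mem_faces hF)
      (by rw [card_insert_of_mem_link hF]; lia)
      (by simpa using B.linear.smul_mem (s F) (b_mem F hF)) fun G hG => ?_]
    · simp only [Finset.mul_sum, ← Finset.sum_sub_distrib, Pi.sub_apply, Pi.smul_apply,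
        smul_eq_mul]
      exact Finset.sum_congr rfl fun G _ => by ring
    · rcases Finset.mem_insert.1 hG with rfl | hGτ
      · simp [b_apply G hF G hG]
      · simp [b_apply F hF G hG, hs G hGτ, (ne_of_mem_link hF hGτ).symm]
  rw [expand u s hs, expand s u hu, sum_link_comm hτ]
  congr 1
  · simp only [Finset.insert_comm, mul_comm (u _)]
  · simp only [mul_comm (u _)]

end IsMinkowskiWeight

theorem isMinkowskiWeight (B : BalancedFan S) (ts : List (S → ℝ)) : B.IsMinkowskiWeight ts := by
  induction ts with
  | nil =>
    intro τ hτ hcard l hl hlτ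
    simpa [mixedDegree] using B.balanced τ hτ hcard l hl hlτ
  | cons s ts ih =>
    intro τ hτ hcard l hl hlτ
    rw [List.length_cons] at hcard
    have hcard' {F} (hF : F ∈ B.link τ) : (insert F τ).card + ts.length + 1 = B.dim := by
      rw [card_insert_of_mem_link hF]; lia
    have reduce_s : ∀ F ∈ B.link τ, l F * B.mixedDegree (s :: ts) (insert F τ) =
        l F * B.mixedDegree (B.reduce τ s :: ts) (insert F τ) := fun F hF => by
      rw [ih.mixedDegree_cons_congr (insert_mem_faces hF) (hcard' hF) (sub_reduce_mem hτ s)]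
    rw [Finset.sum_congr rfl reduce_s, ih.sum_mul_mixedDegree_comm hτ (by lia) hlτ
      fun F hF => reduce_apply_eq_zero hτ s hF]
    refine Finset.sum_eq_zero fun F hF => ?_
    rw [ih.mixedDegree_cons_congr (s := 0) (insert_mem_faces hF) (hcard' hF) (by simpa using hl),
      (isLinearMap_mixedDegree_cons ts _).map_zero, mul_zero]

theorem mixedDegree_cons_eq_sum (hτ : τ ∈ B.faces) (hcard : τ.card + ts.length + 1 = B.dim)
    (hts : t - s ∈ B.linear) (hs : ∀ F ∈ τ, s F = 0) :
    B.mixedDegree (t :: ts) τ = ∑ F ∈ B.link τ, s F * B.mixedDegree ts (insert F τ) :=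
  (B.isMinkowskiWeight ts).mixedDegree_cons_eq_sum hτ hcard hts hs

theorem mixedDegree_cons_of_eq_zero (hτ : τ ∈ B.faces) (hcard : τ.card + ts.length + 1 = B.dim)
    (ht : ∀ F ∈ τ, t F = 0) :
    B.mixedDegree (t :: ts) τ = ∑ F ∈ B.link τ, t F * B.mixedDegree ts (insert F τ) :=
  mixedDegree_cons_eq_sum hτ hcard (by simp) ht

theorem mixedDegree_cons_congr (hτ : τ ∈ B.faces) (hcard : τ.card + ts.length + 1 = B.dim)
    (hts : t - s ∈ B.linear) : B.mixedDegree (t :: ts) τ = B.mixedDegree (s :: ts) τ :=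
  (B.isMinkowskiWeight ts).mixedDegree_cons_congr hτ hcard hts

theorem mixedDegree_swap (hτ : τ ∈ B.faces) (hcard : τ.card + ts.length + 2 = B.dim)
    (s t : S → ℝ) : B.mixedDegree (s :: t :: ts) τ = B.mixedDegree (t :: s :: ts) τ := by
  have expand (s t : S → ℝ) : B.mixedDegree (s :: t :: ts) τ =
      ∑ F ∈ B.link τ, B.reduce τ s F * B.mixedDegree (B.reduce τ t :: ts) (insert F τ) := by
    refine Finset.sum_congr rfl fun F hF => ?_
    rw [mixedDegree_cons_congr (insert_mem_faces hF) (by rw [card_insert_of_mem_link hF]; lia)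
      (sub_reduce_mem hτ t)]
  rw [expand, expand, (B.isMinkowskiWeight ts).sum_mul_mixedDegree_comm hτ hcard
    (fun F hF => reduce_apply_eq_zero hτ s hF) fun F hF => reduce_apply_eq_zero hτ t hF]

theorem mixedDegree_perm {us : List (S → ℝ)} (hperm : ts.Perm us) (hτ : τ ∈ B.faces)
    (hcard : τ.card + ts.length = B.dim) : B.mixedDegree ts τ = B.mixedDegree us τ := by
  induction hperm generalizing τ with
  | nil => rfl
  | cons t _ ih =>
    refine Finset.sum_congr rfl fun F hF => ?_
    rw [ih (insert_mem_faces hF) (by simp [card_insert_of_mem_link hF, ← hcard]; lia)]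
  | swap s t => exact mixedDegree_swap hτ (by simp [← hcard, add_assoc]) _ _
  | trans h₁ _ ih₁ ih₂ => rw [ih₁ hτ hcard, ih₂ hτ (by rw [← h₁.length_eq, hcard])]

theorem mixedDegree_cons_cons_congr (hτ : τ ∈ B.faces) (hcard : τ.card + ts.length + 2 = B.dim)
    {u v : S → ℝ} (hst : s - t ∈ B.linear) (huv : u - v ∈ B.linear) :
    B.mixedDegree (s :: u :: ts) τ = B.mixedDegree (t :: v :: ts) τ := by
  rw [mixedDegree_cons_congr hτ (by simp; lia) hst, mixedDegree_swap hτ hcard,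
    mixedDegree_cons_congr hτ (by simp; lia) huv, mixedDegree_swap hτ hcard]

theorem mixedDegree_quadratic (hτ : τ ∈ B.faces) (hcard : τ.card + ts.length + 2 = B.dim)
    (a b : ℝ) (s t : S → ℝ) :
    B.mixedDegree ((a • s + b • t) :: (a • s + b • t) :: ts) τ =
      a ^ 2 * B.mixedDegree (s :: s :: ts) τ + 2 * a * b * B.mixedDegree (s :: t :: ts) τ +
        b ^ 2 * B.mixedDegree (t :: t :: ts) τ := by
  have linear_comb (us : List (S → ℝ)) : B.mixedDegree ((a • s + b • t) :: us) τ =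
      a * B.mixedDegree (s :: us) τ + b * B.mixedDegree (t :: us) τ := by
    have := isLinearMap_mixedDegree_cons (B := B) us τ
    rw [this.map_add, this.map_smul, this.map_smul, smul_eq_mul, smul_eq_mul]
  rw [linear_comb, mixedDegree_swap hτ hcard s, mixedDegree_swap hτ hcard t, linear_comb,
    linear_comb, mixedDegree_swap hτ hcard t s]
  ring

end BalancedFan

namespace BalancedFan

variable {S : Type*} [Fintype S] [DecidableEq S] {B : BalancedFan S} {τ : Finset S} {F G : S}
  {s t φ : S → ℝ} {ts us : List (S → ℝ)}

variable (B) in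
/-- Local strict convexity: around each face the class of `t` is represented by a function that
vanishes on the face and is positive on its link. -/
def IsAmple (t : S → ℝ) : Prop :=
  ∀ τ ∈ B.faces, ∃ c, t - c ∈ B.linear ∧ (∀ F ∈ τ, c F = 0) ∧ ∀ F ∈ B.link τ, 0 < c F

variable (B) in
/-- Every maximal face has `B.dim` elements. -/
def IsPure : Prop := ∀ τ ∈ B.faces, τ.card < B.dim → (B.link τ).Nonempty

variable (B) in
/-- The links of dimension at least two of the fan are connected. -/
def IsLinkConnected : Prop :=
  ∀ τ ∈ B.faces, τ.card + 3 ≤ B.dim → ∀ g : S → ℝ,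
    (∀ F ∈ B.link τ, ∀ G ∈ B.link (insert F τ), g F = g G) →
    ∀ F ∈ B.link τ, ∀ G ∈ B.link τ, g F = g G

variable (B) in
/-- The Hodge index inequality for the quadratic form `s ↦ B.mixedDegree (s :: s :: ts) τ`. -/
def HodgeIndex (ts : List (S → ℝ)) (τ : Finset S) : Prop :=
  ∀ s f, B.IsAmple f → B.mixedDegree (s :: s :: ts) τ * B.mixedDegree (f :: f :: ts) τ ≤
    B.mixedDegree (s :: f :: ts) τ ^ 2

theorem IsPure.mixedDegree_pos (hB : B.IsPure) (hts : ∀ t ∈ ts, B.IsAmple t) (hτ : τ ∈ B.faces)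
    (hcard : τ.card + ts.length = B.dim) : 0 < B.mixedDegree ts τ := by
  induction ts generalizing τ with
  | nil => exact one_pos
  | cons t ts ih =>
    rw [List.length_cons] at hcard
    obtain ⟨c, hc, c_eq_zero, c_pos⟩ := hts t (by simp) τ hτ
    rw [mixedDegree_cons_eq_sum hτ (by lia) hc c_eq_zero]
    refine Finset.sum_pos (fun F hF => mul_pos (c_pos F hF) ?_) (hB τ hτ (by lia))
    exact ih (fun t ht => hts t (by simp [ht])) (insert_mem_faces hF)
      (by rw [card_insert_of_mem_link hF]; lia)

/- On the plane spanned by `s` and an ample `f` some nonzero combination lies in the kernel of `L`,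
so the quadratic form, which is positive at `f`, is not definite there. -/
theorem hodgeIndex_of_nonpos_on_ker (hB : B.IsPure) (hts : ∀ t ∈ ts, B.IsAmple t)
    (hτ : τ ∈ B.faces) (hcard : τ.card + ts.length + 2 = B.dim) (L : (S → ℝ) →ₗ[ℝ] ℝ)
    (hL : ∀ t, (∀ F ∈ τ, t F = 0) → L t = 0 → B.mixedDegree (t :: t :: ts) τ ≤ 0) :
    B.HodgeIndex ts τ := by
  intro s f hf
  have reduce_zero (t : S → ℝ) : ∀ F ∈ τ, B.reduce τ t F = 0 := fun F => reduce_apply_eq_zero hτ t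
  have pos : 0 < B.mixedDegree (f :: f :: ts) τ :=
    hB.mixedDegree_pos (by simpa [hf] using hts) hτ (by simp; lia)
  rw [mixedDegree_cons_cons_congr hτ hcard (sub_reduce_mem hτ f) (sub_reduce_mem hτ f)] at pos ⊢
  rw [mixedDegree_cons_cons_congr hτ hcard (sub_reduce_mem hτ s) (sub_reduce_mem hτ s),
    mixedDegree_cons_cons_congr hτ hcard (sub_reduce_mem hτ s) (sub_reduce_mem hτ f)]
  set s' := B.reduce τ s
  set f' := B.reduce τ f
  have L_ne_zero : L f' ≠ 0 := fun h => (hL f' (reduce_zero f) h).not_gt pos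
  refine mul_le_sq_of_quadratic_nonpos (x := L s') ?_ pos L_ne_zero
  have nonpos := hL (L f' • s' + (-L s') • f') (fun F hF => by simp [s', f', reduce_zero _ F hF])
    (by simp; ring)
  rw [mixedDegree_quadratic hτ hcard] at nonpos
  linarith

theorem mixedDegree_single_cons (hτ : τ ∈ B.faces) (hcard : τ.card + us.length + 1 = B.dim)
    (hF : F ∉ τ) : B.mixedDegree (Pi.single F 1 :: us) τ =
      if F ∈ B.link τ then B.mixedDegree us (insert F τ) else 0 := by
  rw [mixedDegree_cons_of_eq_zero hτ hcard fun G hG =>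
    Pi.single_eq_of_ne (ne_of_mem_of_not_mem hG hF) 1]
  simp [Pi.single_apply]

variable (B) in
/-- The Gram matrix, in the vertices of the link of `τ`, of the bilinear form
`(s, t) ↦ B.mixedDegree (s :: t :: us) τ`. -/
noncomputable def linkMatrix (us : List (S → ℝ)) (τ : Finset S) :
    Matrix (B.link τ) (B.link τ) ℝ :=
  .of fun F G => B.mixedDegree (Pi.single F.1 1 :: Pi.single G.1 1 :: us) τ

section LinkMatrix

open Matrix

theorem isSymm_linkMatrix (hτ : τ ∈ B.faces) (hcard : τ.card + us.length + 2 = B.dim) :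
    (B.linkMatrix us τ).IsSymm :=
  Matrix.IsSymm.ext fun _ _ => mixedDegree_swap hτ hcard _ _

theorem linkMatrix_apply (hτ : τ ∈ B.faces) (hcard : τ.card + us.length + 2 = B.dim)
    (F G : B.link τ) :
    B.linkMatrix us τ F G = B.mixedDegree (Pi.single G.1 1 :: us) (insert F.1 τ) := by
  rw [linkMatrix, of_apply, mixedDegree_single_cons hτ (by simp; lia) (mem_linkVertices.1 F.2).1,
    if_pos F.2]

theorem linkMatrix_apply_of_ne (hτ : τ ∈ B.faces) (hcard : τ.card + us.length + 2 = B.dim)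
    {F G : B.link τ} (hFG : F ≠ G) : B.linkMatrix us τ F G =
      if G.1 ∈ B.link (insert F.1 τ) then B.mixedDegree us (insert G.1 (insert F.1 τ)) else 0 := by
  have hG : G.1 ∉ insert F.1 τ := by
    simpa [Subtype.ext_iff.not.1 hFG.symm] using (mem_linkVertices.1 G.2).1
  rw [linkMatrix_apply hτ hcard, mixedDegree_single_cons (insert_mem_faces F.2)
    (by rw [card_insert_of_mem_link F.2]; lia) hG]

theorem linkMatrix_mulVec (hτ : τ ∈ B.faces) (hcard : τ.card + us.length + 2 = B.dim)
    (ht : ∀ F ∈ τ, t F = 0) (F : B.link τ) :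
    (B.linkMatrix us τ *ᵥ fun G => t G) F = B.mixedDegree (t :: us) (insert F.1 τ) := by
  have single_swap : B.mixedDegree (t :: us) (insert F.1 τ) =
      B.mixedDegree (t :: Pi.single F.1 1 :: us) τ := by
    rw [mixedDegree_swap hτ hcard, mixedDegree_single_cons hτ (by simp; lia)
      (mem_linkVertices.1 F.2).1, if_pos F.2]
  rw [single_swap, mixedDegree_cons_of_eq_zero hτ (by simp; lia) ht,
    ← Finset.sum_coe_sort (B.link τ)]
  refine Finset.sum_congr rfl fun G _ => ?_
  rw [← linkMatrix_apply hτ hcard, (isSymm_linkMatrix hτ hcard).apply, mul_comm]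

theorem dotProduct_linkMatrix_mulVec (hτ : τ ∈ B.faces) (hcard : τ.card + us.length + 2 = B.dim)
    (hs : ∀ F ∈ τ, s F = 0) (ht : ∀ F ∈ τ, t F = 0) :
    (fun F : B.link τ => s F) ⬝ᵥ B.linkMatrix us τ *ᵥ (fun F => t F) =
      B.mixedDegree (s :: t :: us) τ := by
  rw [mixedDegree_cons_of_eq_zero hτ (by simp; lia) hs, ← Finset.sum_coe_sort (B.link τ)]
  exact Finset.sum_congr rfl fun F _ => by rw [linkMatrix_mulVec hτ hcard ht]

theorem dotProduct_linkMatrix_mulVec_le (hB : B.IsPure) (hτ : τ ∈ B.faces)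
    (hcard : τ.card + (φ :: ts).length + 2 = B.dim) (hts : ∀ t ∈ φ :: ts, B.IsAmple t)
    (hodge : ∀ F ∈ B.link τ, B.HodgeIndex ts (insert F τ)) {c : S → ℝ} (hc : φ - c ∈ B.linear)
    (c_zero : ∀ F ∈ τ, c F = 0) (c_pos : ∀ F ∈ B.link τ, 0 < c F) (ht : ∀ F ∈ τ, t F = 0) :
    (fun F : B.link τ => t F) ⬝ᵥ B.linkMatrix (φ :: ts) τ *ᵥ (fun F => t F) ≤
      ∑ F : B.link τ, c F / B.mixedDegree (φ :: φ :: ts) (insert F.1 τ) *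
        (B.linkMatrix (φ :: ts) τ *ᵥ fun F => t F) F ^ 2 := by
  rw [List.length_cons] at hcard
  have hcard' {F} (hF : F ∈ B.link τ) : (insert F τ).card + ts.length + 2 = B.dim := by
    rw [card_insert_of_mem_link hF]; lia
  have expand : B.mixedDegree (t :: t :: φ :: ts) τ =
      ∑ F : B.link τ, c F * B.mixedDegree (t :: t :: ts) (insert F.1 τ) := by
    have perm : (t :: t :: φ :: ts).Perm (φ :: t :: t :: ts) := List.perm_middle (l₁ := [t, t])
    rw [mixedDegree_perm perm hτ (by simp; lia), mixedDegree_cons_eq_sum hτ (by simp; lia) hc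
      c_zero, ← Finset.sum_coe_sort (B.link τ)]
  rw [dotProduct_linkMatrix_mulVec hτ (by simpa using hcard) ht ht, expand]
  refine Finset.sum_le_sum fun F _ => ?_
  have pos : 0 < B.mixedDegree (φ :: φ :: ts) (insert F.1 τ) :=
    hB.mixedDegree_pos (by simpa using hts) (insert_mem_faces F.2)
      (by simp [← hcard' F.2, add_assoc])
  rw [linkMatrix_mulVec hτ (by simpa using hcard) ht, div_mul_eq_mul_div, le_div_iff₀ pos,
    mul_assoc]
  exact mul_le_mul_of_nonneg_left (hodge F F.2 t φ (hts φ (by simp))) (c_pos F F.2).le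

theorem mixedDegree_insert_insert_pos (hB : B.IsPure)
    (hcard : τ.card + ts.length + 2 = B.dim) (hts : ∀ t ∈ ts, B.IsAmple t) {F G : S}
    (hF : F ∈ B.link τ) (hG : G ∈ B.link (insert F τ)) :
    0 < B.mixedDegree ts (insert G (insert F τ)) :=
  hB.mixedDegree_pos hts (insert_mem_faces hG)
    (by rw [card_insert_of_mem_link hG, card_insert_of_mem_link hF]; lia)

theorem eq_of_linkMatrix_pos (hB : B.IsPure) (hlink : B.IsLinkConnected) (hτ : τ ∈ B.faces)
    (hcard : τ.card + ts.length + 2 = B.dim) (hne : ts ≠ []) (hts : ∀ t ∈ ts, B.IsAmple t)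
    {g : B.link τ → ℝ} (hg : ∀ F G, F ≠ G → 0 < B.linkMatrix ts τ F G → g F = g G)
    (F G : B.link τ) : g F = g G := by
  have extend_apply (F : B.link τ) : Function.extend Subtype.val g 0 F.1 = g F :=
    Subtype.val_injective.extend_apply g 0 F
  have length_pos := List.length_pos_iff.2 hne
  have constant := hlink τ hτ (by lia) (Function.extend Subtype.val g 0) fun F hF G hG => by
    have hGF : G ≠ F := ne_of_mem_link hG (Finset.mem_insert_self F τ)
    have hGτ := (mem_link_swap hτ hF hG).1
    have hFG : (⟨F, hF⟩ : B.link τ) ≠ ⟨G, hGτ⟩ := fun h => hGF (congrArg Subtype.val h).symm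
    rw [extend_apply ⟨F, hF⟩, extend_apply ⟨G, hGτ⟩]
    refine hg _ _ hFG ?_
    rw [linkMatrix_apply_of_ne hτ hcard hFG, if_pos hG]
    exact mixedDegree_insert_insert_pos hB hcard hts hF hG
  simpa only [extend_apply] using constant F.1 F.2 G.1 G.2

theorem mixedDegree_self_nonpos (hB : B.IsPure) (hlink : B.IsLinkConnected) (hτ : τ ∈ B.faces)
    (hcard : τ.card + (φ :: ts).length + 2 = B.dim) (hts : ∀ t ∈ φ :: ts, B.IsAmple t)
    (hodge : ∀ F ∈ B.link τ, B.HodgeIndex ts (insert F τ)) (ht : ∀ F ∈ τ, t F = 0)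
    (hφ : B.mixedDegree (t :: φ :: φ :: ts) τ = 0) : B.mixedDegree (t :: t :: φ :: ts) τ ≤ 0 := by
  obtain ⟨c, hc, c_zero, c_pos⟩ := hts φ (by simp) τ hτ
  have hlen : (φ :: ts).length = ts.length + 1 := List.length_cons
  have pos_insert (F : B.link τ) : 0 < B.mixedDegree (φ :: φ :: ts) (insert F.1 τ) :=
    hB.mixedDegree_pos (by simpa using hts) (insert_mem_faces F.2)
      (by simp [card_insert_of_mem_link F.2]; lia)
  rw [← dotProduct_linkMatrix_mulVec hτ hcard ht ht]
  refine dotProduct_mulVec_nonpos_of_bochner (c := fun F : B.link τ => c F)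
    (p := fun F => B.mixedDegree (φ :: φ :: ts) (insert F.1 τ)) (isSymm_linkMatrix hτ hcard)
    (fun F G hFG => ?_) (fun F => c_pos F.1 F.2) pos_insert (funext fun F => ?_) 
    (fun _ => eq_of_linkMatrix_pos hB hlink hτ hcard (List.cons_ne_nil φ ts) hts) (fun v => ?_) ?_
  · rw [linkMatrix_apply_of_ne hτ hcard hFG]
    split_ifs with hG
    exacts [(mixedDegree_insert_insert_pos hB hcard hts F.2 hG).le, le_rfl]
  · rw [linkMatrix_mulVec hτ hcard c_zero]
    exact (mixedDegree_cons_congr (insert_mem_faces F.2)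
      (by rw [card_insert_of_mem_link F.2]; lia) hc).symm
  · have vanishes : ∀ F ∈ τ, Function.extend Subtype.val v 0 F = 0 := fun F hF =>
      Function.extend_apply' _ _ _ fun ⟨G, hG⟩ => ne_of_mem_link G.2 hF hG
    simpa only [Subtype.val_injective.extend_apply] using
      dotProduct_linkMatrix_mulVec_le hB hτ hcard hts hodge hc c_zero c_pos vanishes
  · rw [← hφ, mixedDegree_cons_of_eq_zero hτ (by simp; lia) ht, ← Finset.sum_coe_sort (B.link τ)]
    rfl

end LinkMatrix

theorem hodgeIndex (hB : B.IsPure) (hlink : B.IsLinkConnected)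
    (hbase : ∀ τ ∈ B.faces, τ.card + 2 = B.dim → B.HodgeIndex [] τ)
    (hts : ∀ t ∈ ts, B.IsAmple t) (hτ : τ ∈ B.faces) (hcard : τ.card + ts.length + 2 = B.dim) :
    B.HodgeIndex ts τ := by
  induction ts generalizing τ with
  | nil => exact hbase τ hτ hcard
  | cons φ ts ih =>
    refine hodgeIndex_of_nonpos_on_ker hB hts hτ hcard
      (isLinearMap_mixedDegree_cons (B := B) (φ :: φ :: ts) τ).mk' fun t ht hφ => ?_
    refine mixedDegree_self_nonpos hB hlink hτ hcard hts (fun F hF => ?_) ht hφ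
    exact ih (fun t ht => hts t (by simp [ht])) (insert_mem_faces hF)
      (by rw [card_insert_of_mem_link hF, ← hcard, List.length_cons]; lia)

end BalancedFan

/-! ### Flats of a matroid and the Bergman fan -/

/-- The flats of a loopless matroid on `E`, with their ranks. -/
structure RankedFlats (E : Type*) [Fintype E] where
  IsFlat : Finset E → Prop
  rank : Finset E → ℕ
  isFlat_empty : IsFlat ∅
  isFlat_univ : IsFlat Finset.univ
  rank_empty : rank ∅ = 0
  rank_lt_rank : ∀ {F G}, IsFlat F → IsFlat G → F ⊂ G → rank F < rank G
  exists_cover : ∀ {F i}, IsFlat F → i ∉ F → ∃ C, IsFlat C ∧ rank C = rank F + 1 ∧ F ⊆ C ∧ i ∈ C ∧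
    ∀ H, IsFlat H → F ⊆ H → i ∈ H → C ⊆ H

namespace RankedFlats

variable {E : Type*} [Fintype E] {M : RankedFlats E} {F G H p q : Finset E} {i : E}

theorem rank_le_rank (hF : M.IsFlat F) (hG : M.IsFlat G) (h : F ⊆ G) : M.rank F ≤ M.rank G := by
  rcases h.eq_or_ssubset with rfl | h
  exacts [le_rfl, (M.rank_lt_rank hF hG h).le]

theorem eq_of_subset_of_rank_le (hF : M.IsFlat F) (hG : M.IsFlat G) (h : F ⊆ G)
    (hrank : M.rank G ≤ M.rank F) : F = G := by
  by_contra hne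
  exact (M.rank_lt_rank hF hG (h.ssubset_of_ne hne)).not_ge hrank

theorem rank_le_rank_univ (hF : M.IsFlat F) : M.rank F ≤ M.rank Finset.univ :=
  rank_le_rank hF M.isFlat_univ F.subset_univ

theorem exists_isFlat_rank_eq (hG : M.IsFlat G) (hH : M.IsFlat H) (h : G ⊆ H) {a : ℕ}
    (hGa : M.rank G ≤ a) (haH : a ≤ M.rank H) :
    ∃ F, M.IsFlat F ∧ M.rank F = a ∧ G ⊆ F ∧ F ⊆ H := by
  induction a, hGa using Nat.le_induction with
  | base => exact ⟨G, hG, rfl, subset_rfl, h⟩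
  | succ a _ ih =>
    obtain ⟨F, hF, rank_F, hGF, hFH⟩ := ih (by lia)
    have hne : F ≠ H := by rintro rfl; lia
    obtain ⟨i, hiH, hiF⟩ := Finset.exists_of_ssubset (hFH.ssubset_of_ne hne)
    obtain ⟨C, hC, rank_C, hFC, -, C_min⟩ := M.exists_cover hF hiF
    exact ⟨C, hC, by lia, hGF.trans hFC, C_min H hH hFH hiH⟩

variable (M) in
open Classical in
/-- The flats covering `G` in the lattice of flats that are contained in `H`. -/
noncomputable def covers (G H : Finset E) : Finset (Finset E) :=
  {F | M.IsFlat F ∧ M.rank F = M.rank G + 1 ∧ G ⊆ F ∧ F ⊆ H}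

theorem mem_covers :
    F ∈ M.covers G H ↔ M.IsFlat F ∧ M.rank F = M.rank G + 1 ∧ G ⊆ F ∧ F ⊆ H := by
  simp [covers]

theorem isFlat_of_mem_covers (hF : F ∈ M.covers G H) : M.IsFlat F := (mem_covers.1 hF).1

theorem rank_of_mem_covers (hF : F ∈ M.covers G H) : M.rank F = M.rank G + 1 :=
  (mem_covers.1 hF).2.1

theorem ssubset_of_mem_covers (hF : F ∈ M.covers G H) : G ⊂ F := by
  obtain ⟨-, hrank, hGF, -⟩ := mem_covers.1 hF
  exact hGF.ssubset_of_ne (by rintro rfl; lia)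

theorem subset_of_mem_covers (hF : F ∈ M.covers G H) : F ⊆ H := (mem_covers.1 hF).2.2.2

theorem covers_nonempty (hG : M.IsFlat G) (hH : M.IsFlat H) (h : G ⊂ H) :
    (M.covers G H).Nonempty := by
  obtain ⟨F, hF, hrank, hGF, hFH⟩ :=
    exists_isFlat_rank_eq hG hH h.1 (Nat.le_succ _) (M.rank_lt_rank hG hH h)
  exact ⟨F, mem_covers.2 ⟨hF, hrank, hGF, hFH⟩⟩

theorem exists_mem_covers (hG : M.IsFlat G) (hH : M.IsFlat H) (h : G ⊆ H) (hi : i ∈ H)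
    (hiG : i ∉ G) : ∃ F ∈ M.covers G H, i ∈ F := by
  obtain ⟨C, hC, hrank, hGC, hiC, C_min⟩ := M.exists_cover hG hiG
  exact ⟨C, mem_covers.2 ⟨hC, hrank, hGC, C_min H hH h hi⟩, hiC⟩

theorem subset_of_mem_covers_of_mem (hG : M.IsFlat G) (hp : p ∈ M.covers G H) (hip : i ∈ p)
    (hi : i ∉ G) (hF : M.IsFlat F) (hGF : G ⊆ F) (hiF : i ∈ F) : p ⊆ F := by
  obtain ⟨C, hC, rank_C, -, -, C_min⟩ := M.exists_cover hG hi
  have C_eq : C = p := eq_of_subset_of_rank_le hC (isFlat_of_mem_covers hp)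
    (C_min p (isFlat_of_mem_covers hp) (ssubset_of_mem_covers hp).1 hip)
    (by rw [rank_C, rank_of_mem_covers hp])
  exact C_eq ▸ C_min F hF hGF hiF

theorem eq_of_mem_covers (hG : M.IsFlat G) (hp : p ∈ M.covers G H) (hq : q ∈ M.covers G H)
    (hip : i ∈ p) (hiq : i ∈ q) (hi : i ∉ G) : p = q :=
  eq_of_subset_of_rank_le (isFlat_of_mem_covers hp) (isFlat_of_mem_covers hq)
    (subset_of_mem_covers_of_mem hG hp hip hi (isFlat_of_mem_covers hq)
      (ssubset_of_mem_covers hq).1 hiq)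
    (by rw [rank_of_mem_covers hp, rank_of_mem_covers hq])

theorem exists_isFlat_of_mem_covers (hG : M.IsFlat G) (hH : M.IsFlat H) (hp : p ∈ M.covers G H)
    (hq : q ∈ M.covers G H) :
    ∃ F, M.IsFlat F ∧ M.rank F ≤ M.rank G + 2 ∧ p ⊆ F ∧ q ⊆ F ∧ F ⊆ H := by
  have flat_p := isFlat_of_mem_covers hp
  have rank_p := rank_of_mem_covers hp
  by_cases hqp : q ⊆ p
  · exact ⟨p, flat_p, by lia, subset_rfl, hqp, subset_of_mem_covers hp⟩
  obtain ⟨j, hjq, hjp⟩ := Finset.not_subset.1 hqp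
  have hpG := (ssubset_of_mem_covers hp).1
  obtain ⟨F, hF, rank_F, hpF, hjF, F_min⟩ := M.exists_cover flat_p hjp
  exact ⟨F, hF, by lia, hpF,
    subset_of_mem_covers_of_mem hG hq hjq (fun hj => hjp (hpG hj)) hF (hpG.trans hpF) hjF,
    F_min H hH (subset_of_mem_covers hp) (subset_of_mem_covers hq hjq)⟩

theorem biUnion_covers_sdiff [DecidableEq E] (hG : M.IsFlat G) (hH : M.IsFlat H) (h : G ⊆ H) :
    (M.covers G H).biUnion (· \ G) = H \ G := by
  ext i
  simp only [Finset.mem_biUnion, Finset.mem_sdiff]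
  refine ⟨fun ⟨F, hF, hiF, hiG⟩ => ⟨subset_of_mem_covers hF hiF, hiG⟩, fun ⟨hiH, hiG⟩ => ?_⟩
  obtain ⟨F, hF, hiF⟩ := exists_mem_covers hG hH h hiH hiG
  exact ⟨F, hF, hiF, hiG⟩

theorem pairwiseDisjoint_covers_sdiff [DecidableEq E] (hG : M.IsFlat G) :
    (M.covers G H : Set (Finset E)).PairwiseDisjoint (· \ G) := by
  intro p hp q hq hpq
  refine Finset.disjoint_left.2 fun i hip hiq => hpq ?_
  rw [Finset.mem_sdiff] at hip hiq
  exact eq_of_mem_covers hG hp hq hip.1 hiq.1 hip.2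

end RankedFlats

section Modular

variable {E : Type*}

/-- The modular function `F ↦ a + ∑ i ∈ F, c i`. -/
def modular (a : ℝ) (c : E → ℝ) (F : Finset E) : ℝ := a + ∑ i ∈ F, c i

variable (E) in
/-- The space of modular functions on the finite subsets of `E`. -/
def modularFunctions : Submodule ℝ (Finset E → ℝ) where
  carrier := {t | ∃ a c, modular a c = t}
  zero_mem' := ⟨0, 0, by ext; simp [modular]⟩
  add_mem' := by
    rintro _ _ ⟨a, c, rfl⟩ ⟨b, d, rfl⟩
    exact ⟨a + b, c + d, by ext; simp [modular, Finset.sum_add_distrib]; ring⟩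
  smul_mem' := by
    rintro x _ ⟨a, c, rfl⟩
    exact ⟨x * a, x • c, by ext; simp [modular, Finset.mul_sum, mul_add]⟩

theorem modular_mem (a : ℝ) (c : E → ℝ) : modular a c ∈ modularFunctions E := ⟨a, c, rfl⟩

theorem modular_sub_modular [DecidableEq E] (a : ℝ) (c : E → ℝ) {F G : Finset E} (h : F ⊆ G) :
    modular a c G - modular a c F = ∑ i ∈ G \ F, c i := by
  simp only [modular, ← Finset.sum_sdiff h]
  ring

theorem modular_single [DecidableEq E] (i : E) (F : Finset E) :
    modular 0 (Pi.single i 1) F = if i ∈ F then 1 else 0 := by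
  simp [modular, Pi.single_apply]

theorem RankedFlats.sum_covers_modular_sub [Fintype E] {M : RankedFlats E} {G H : Finset E}
    (hG : M.IsFlat G) (hH : M.IsFlat H) (h : G ⊆ H) {l : Finset E → ℝ}
    (hl : l ∈ modularFunctions E) : ∑ F ∈ M.covers G H, (l F - l G) = l H - l G := by
  classical
  obtain ⟨a, c, rfl⟩ := hl
  rw [modular_sub_modular a c h, ← biUnion_covers_sdiff hG hH h,
    Finset.sum_biUnion (pairwiseDisjoint_covers_sdiff hG)]
  exact Finset.sum_congr rfl fun F hF => modular_sub_modular a c (ssubset_of_mem_covers hF).1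

/- For each cover `F` distribute the mass `t F` evenly over `F \ G`. -/
theorem RankedFlats.exists_modular_eqOn_covers [Fintype E] [DecidableEq E] {M : RankedFlats E}
    {G : Finset E} (hG : M.IsFlat G) (H : Finset E) (t : Finset E → ℝ) :
    ∃ c : E → ℝ, (∀ i, i ∉ H \ G → c i = 0) ∧ ∀ F ∈ M.covers G H, modular 0 c F = t F := by
  refine ⟨fun i => ∑ F ∈ M.covers G H, if i ∈ F \ G then t F / (F \ G).card else 0,
    fun i hi => Finset.sum_eq_zero fun F hF => if_neg fun hiF => ?_, fun F hF => ?_⟩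
  · exact hi (Finset.sdiff_subset_sdiff (subset_of_mem_covers hF) subset_rfl hiF)
  · have others_disjoint : ∀ p ∈ M.covers G H, p ≠ F → F ∩ (p \ G) = ∅ := fun p hp hpF => by
      refine Finset.disjoint_iff_inter_eq_empty.1 (Finset.disjoint_left.2 fun i hiF hip => hpF ?_)
      rw [Finset.mem_sdiff] at hip
      exact eq_of_mem_covers hG hp hF hip.1 hiF hip.2
    have card_ne_zero : ((F \ G).card : ℝ) ≠ 0 := by
      simpa [Finset.sdiff_eq_empty_iff_subset] using (ssubset_of_mem_covers hF).2
    simp only [modular, zero_add]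
    rw [Finset.sum_comm]
    simp only [Finset.sum_ite_mem, Finset.sum_const, nsmul_eq_mul]
    rw [Finset.sum_eq_single_of_mem F hF fun p hp hpF => by simp [others_disjoint p hp hpF],
      Finset.inter_eq_right.2 Finset.sdiff_subset, mul_div_cancel₀ _ card_ne_zero]

@[elab_as_elim]
theorem chain_induction [DecidableEq E] {P : Finset (Finset E) → Prop} (singleton : P {∅})
    (insert_max : ∀ (τ : Finset (Finset E)) (L T : Finset E), L ∈ τ → (∀ X ∈ τ, X ⊆ L) → L ⊂ T →
      P τ → P (insert T τ))
    {τ : Finset (Finset E)} (hτ : IsChain (· ⊆ ·) (τ : Set (Finset E))) (hempty : ∅ ∈ τ) :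
    P τ := by
  have subset_of_card_le {σ : Finset (Finset E)} (hσ : IsChain (· ⊆ ·) (σ : Set (Finset E)))
      {X Y : Finset E} (hX : X ∈ σ) (hY : Y ∈ σ) (h : X.card ≤ Y.card) : X ⊆ Y :=
    (hσ.total hX hY).elim id fun hYX => (Finset.eq_of_subset_of_card_le hYX h).ge
  revert hτ hempty
  refine Finset.induction_on_max_value Finset.card τ (by simp)
    fun T τ hT card_le ih hτ hempty => ?_
  rcases T.eq_empty_or_nonempty with rfl | hne
  · have τ_empty : τ = ∅ := Finset.eq_empty_of_forall_notMem fun X hX => by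
      have : X = ∅ := by simpa using card_le X hX
      exact hT (this ▸ hX)
    rwa [τ_empty]
  · have empty_mem : ∅ ∈ τ := (Finset.mem_insert.1 hempty).resolve_left hne.ne_empty.symm
    have chain : IsChain (· ⊆ ·) (τ : Set (Finset E)) := hτ.mono (by simp)
    obtain ⟨L, hL, L_max⟩ := Finset.exists_max_image τ Finset.card ⟨∅, empty_mem⟩
    have hLT : L ⊆ T := subset_of_card_le hτ (by simp [hL]) (by simp) (card_le L hL)
    exact insert_max τ L T hL (fun X hX => subset_of_card_le chain hX hL (L_max X hX))
      (hLT.ssubset_of_ne (by rintro rfl; exact hT hL)) (ih chain empty_mem)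

/-- The property that `t F` lies strictly above the linear interpolation of `t L` and `t T` in the
cardinality, whenever `L ⊂ F ⊂ T`. -/
def StrictlyConcaveOnChains (t : Finset E → ℝ) : Prop :=
  ∀ ⦃L F T : Finset E⦄, L ⊂ F → F ⊂ T →
    (T.card - F.card : ℝ) * t L + (F.card - L.card : ℝ) * t T < (T.card - L.card : ℝ) * t F

theorem exists_modular_slope_eq {l : Finset E → ℝ} (hl : l ∈ modularFunctions E) (L : Finset E)
    (m : ℝ) :
    ∃ l' ∈ modularFunctions E, (∀ F ⊆ L, l' F = l F) ∧
      ∀ F, L ⊆ F → l' F = l L + (F.card - L.card) * m := by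
  classical
  obtain ⟨a, c, rfl⟩ := hl
  let d : E → ℝ := fun i => if i ∈ L then c i else m
  have below {F : Finset E} (hF : F ⊆ L) : modular a d F = modular a c F := by
    unfold modular
    rw [Finset.sum_congr rfl fun i hi => if_pos (hF hi)]
  refine ⟨modular a d, modular_mem _ _, fun F => below, fun F hF => ?_⟩
  rw [← sub_eq_iff_eq_add', ← below subset_rfl, modular_sub_modular a d hF,
    Finset.sum_congr rfl fun i hi => if_neg (Finset.mem_sdiff.1 hi).2, Finset.sum_const,
    nsmul_eq_mul, Finset.cast_card_sdiff hF]

/- The interpolating function has constant slope on `T \ L` for consecutive members `L ⊂ T` of the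
chain. -/
theorem exists_modular_interpolation {τ : Finset (Finset E)}
    (hτ : IsChain (· ⊆ ·) (τ : Set (Finset E))) (hempty : ∅ ∈ τ) (t : Finset E → ℝ) :
    ∃ l ∈ modularFunctions E, (∀ F ∈ τ, l F = t F) ∧
      ∀ F, F ∉ τ → (∀ X ∈ τ, X ⊆ F ∨ F ⊆ X) → (∃ X ∈ τ, F ⊆ X) → ∃ L ∈ τ, ∃ T ∈ τ, L ⊂ F ∧ F ⊂ T ∧
        (T.card - F.card : ℝ) * t L + (F.card - L.card : ℝ) * t T =
          (T.card - L.card : ℝ) * l F := by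
  classical
  refine chain_induction ?_ (fun τ L T hL L_max hLT ih => ?_) hτ hempty
  · refine ⟨modular (t ∅) 0, modular_mem _ _, by simp [modular], fun F hF _ ⟨X, hX, hFX⟩ => ?_⟩
    rw [Finset.mem_singleton] at hX hF
    exact absurd (Finset.subset_empty.1 (hX ▸ hFX)) hF
  · obtain ⟨l, hl, l_eq, l_interp⟩ := ih
    set m : ℝ := (t T - t L) / (T.card - L.card)
    have card_lt : (L.card : ℝ) < T.card := mod_cast Finset.card_lt_card hLT
    obtain ⟨l', hl', below, above⟩ := exists_modular_slope_eq hl L m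
    rw [l_eq L hL] at above
    have slope : (T.card - L.card : ℝ) * m = t T - t L := mul_div_cancel₀ _ (sub_pos.2 card_lt).ne'
    refine ⟨l', hl', fun F hF => ?_, fun F hF hcomp ⟨X, hX, hFX⟩ => ?_⟩
    · rcases Finset.mem_insert.1 hF with rfl | hF
      · rw [above _ hLT.1, slope, add_sub_cancel]
      · rw [below F (L_max F hF), l_eq F hF]
    · rw [Finset.mem_insert, not_or] at hF
      rcases hcomp L (by simp [hL]) with hLF | hFL
      · have hFT : F ⊆ T := by
          rcases Finset.mem_insert.1 hX with rfl | hX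
          exacts [hFX, (hFX.trans (L_max X hX)).trans hLT.1]
        refine ⟨L, by simp [hL], T, by simp,
          hLF.ssubset_of_ne (by rintro rfl; exact hF.2 hL), hFT.ssubset_of_ne hF.1, ?_⟩
        rw [above F hLF]
        linear_combination (L.card - F.card : ℝ) * slope
      · obtain ⟨L', hL', T', hT', hlt, hlt', heq⟩ :=
          l_interp F hF.2 (fun X hX => hcomp X (by simp [hX])) ⟨L, hL, hFL⟩
        exact ⟨L', by simp [hL'], T', by simp [hT'], hlt, hlt', by rw [heq, below F hFL]⟩

theorem StrictlyConcaveOnChains.exists_modular_lt {t : Finset E → ℝ}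
    (ht : StrictlyConcaveOnChains t) {τ : Finset (Finset E)}
    (hτ : IsChain (· ⊆ ·) (τ : Set (Finset E))) (hempty : ∅ ∈ τ) :
    ∃ l ∈ modularFunctions E, (∀ F ∈ τ, l F = t F) ∧
      ∀ F, F ∉ τ → (∀ X ∈ τ, X ⊆ F ∨ F ⊆ X) → (∃ X ∈ τ, F ⊆ X) → l F < t F := by
  obtain ⟨l, hl, l_eq, l_interp⟩ := exists_modular_interpolation hτ hempty t
  refine ⟨l, hl, l_eq, fun F hF hcomp hbdd => ?_⟩
  obtain ⟨L, -, T, -, hLF, hFT, heq⟩ := l_interp F hF hcomp hbdd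
  have card_lt : (L.card : ℝ) < T.card := mod_cast Finset.card_lt_card (hLF.trans hFT)
  exact lt_of_mul_lt_mul_left (heq ▸ ht hLF hFT) (sub_pos.2 card_lt).le

end Modular

/-- `G ⊂ H` are consecutive members of the chain `τ`. -/
structure IsConsecutive {E : Type*} (τ : Finset (Finset E)) (G H : Finset E) : Prop where
  left_mem : G ∈ τ
  right_mem : H ∈ τ
  ssubset : G ⊂ H
  subset_or_subset : ∀ X ∈ τ, X ⊆ G ∨ H ⊆ X

namespace RankedFlats

variable {E : Type*} [Fintype E] {M : RankedFlats E} {τ : Finset (Finset E)}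
  {F G H X : Finset E} {a : ℕ} {t : Finset E → ℝ}

variable (M) in
/-- A flag of flats containing the least and the greatest flat. -/
structure IsFlag (τ : Finset (Finset E)) : Prop where
  isFlat : ∀ X ∈ τ, M.IsFlat X
  isChain : IsChain (· ⊆ ·) (τ : Set (Finset E))
  empty_mem : ∅ ∈ τ
  univ_mem : Finset.univ ∈ τ

theorem IsFlag.subset_of_rank_le (hτ : M.IsFlag τ) (hF : F ∈ τ) (hG : G ∈ τ)
    (h : M.rank F ≤ M.rank G) : F ⊆ G :=
  (hτ.isChain.total hF hG).elim id fun hGF =>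
    (eq_of_subset_of_rank_le (hτ.isFlat G hG) (hτ.isFlat F hF) hGF h).ge

variable (M) in
/-- The ranks not taken by the members of `τ`. -/
def missingRanks (τ : Finset (Finset E)) : Finset ℕ :=
  Finset.range (M.rank Finset.univ + 1) \ τ.image M.rank

theorem mem_missingRanks :
    a ∈ M.missingRanks τ ↔ a ≤ M.rank Finset.univ ∧ ∀ X ∈ τ, M.rank X ≠ a := by
  simp [missingRanks]

theorem card_missingRanks (hτ : M.IsFlag τ) :
    (M.missingRanks τ).card + τ.card = M.rank Finset.univ + 1 := by
  have injOn : Set.InjOn M.rank τ := fun _ hF _ hG h =>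
    (hτ.subset_of_rank_le hF hG h.le).antisymm (hτ.subset_of_rank_le hG hF h.ge)
  have image_subset : τ.image M.rank ⊆ Finset.range (M.rank Finset.univ + 1) := by
    intro a ha
    obtain ⟨X, hX, rfl⟩ := Finset.mem_image.1 ha
    simpa using rank_le_rank_univ (hτ.isFlat X hX)
  rw [← Finset.card_image_of_injOn injOn, missingRanks, Finset.card_sdiff_add_card_eq_card
    image_subset, Finset.card_range]

theorem exists_missingRanks_eq_pair (hτ : M.IsFlag τ) (hcard : τ.card + 1 = M.rank Finset.univ) :
    ∃ a b, a < b ∧ M.missingRanks τ = {a, b} := by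
  obtain ⟨a, b, hne, missing_eq⟩ := Finset.card_eq_two.1
    (show (M.missingRanks τ).card = 2 by have := card_missingRanks hτ; lia)
  rcases hne.lt_or_gt with h | h
  exacts [⟨a, b, h, missing_eq⟩, ⟨b, a, h, missing_eq.trans (Finset.pair_comm a b)⟩]

theorem exists_isConsecutive_rank (hτ : M.IsFlag τ) (ha : a ∈ M.missingRanks τ) :
    ∃ G H, IsConsecutive τ G H ∧ M.rank G < a ∧ a < M.rank H := by
  obtain ⟨ha_le, ha_ne⟩ := mem_missingRanks.1 ha
  obtain ⟨G, hG, G_max⟩ := Finset.exists_max_image {X ∈ τ | M.rank X < a} M.rank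
    ⟨∅, by simpa [hτ.empty_mem] using (ha_ne _ hτ.empty_mem).lt_of_le (by simp [M.rank_empty])⟩
  obtain ⟨H, hH, H_min⟩ := Finset.exists_min_image {X ∈ τ | a < M.rank X} M.rank
    ⟨Finset.univ, by simpa [hτ.univ_mem] using (ha_ne _ hτ.univ_mem).symm.lt_of_le ha_le⟩
  rw [Finset.mem_filter] at hG hH
  have rank_lt : M.rank G < M.rank H := hG.2.trans hH.2
  refine ⟨G, H, ⟨hG.1, hH.1, ?_, fun X hX => ?_⟩, hG.2, hH.2⟩
  · exact (hτ.subset_of_rank_le hG.1 hH.1 rank_lt.le).ssubset_of_ne (by rintro rfl; lia)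
  · refine (ha_ne X hX).lt_or_gt.imp (fun h => ?_) fun h => ?_
    · exact hτ.subset_of_rank_le hX hG.1 (G_max X (by simp [hX, h]))
    · exact hτ.subset_of_rank_le hH.1 hX (H_min X (by simp [hX, h]))

theorem mem_missingRanks_of_lt (hτ : M.IsFlag τ) (hGH : IsConsecutive τ G H)
    (hGa : M.rank G < a) (haH : a < M.rank H) : a ∈ M.missingRanks τ := by
  have flat_H := hτ.isFlat H hGH.right_mem
  refine mem_missingRanks.2 ⟨haH.le.trans (rank_le_rank_univ flat_H), fun X hX => ?_⟩
  rcases hGH.subset_or_subset X hX with h | h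
  · exact ((rank_le_rank (hτ.isFlat X hX) (hτ.isFlat G hGH.left_mem) h).trans_lt hGa).ne
  · exact (haH.trans_le (rank_le_rank flat_H (hτ.isFlat X hX) h)).ne'

theorem exists_modular_eqOn_covers_of_sum_eq_zero (hτ : M.IsFlag τ) (hGH : IsConsecutive τ G H)
    (hsum : ∑ p ∈ M.covers G H, t p = 0) :
    ∃ l ∈ modularFunctions E, (∀ X ∈ τ, l X = 0) ∧ ∀ p ∈ M.covers G H, l p = t p := by
  classical
  have flat_G := hτ.isFlat G hGH.left_mem
  obtain ⟨c, c_eq_zero, c_eq⟩ := exists_modular_eqOn_covers flat_G H t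
  have below {X : Finset E} (hX : X ⊆ G) : modular 0 c X = 0 := by
    rw [modular, zero_add]
    exact Finset.sum_eq_zero fun i hi => c_eq_zero i fun h => (Finset.mem_sdiff.1 h).2 (hX hi)
  refine ⟨modular 0 c, modular_mem _ _, fun X hX => ?_, c_eq⟩
  rcases hGH.subset_or_subset X hX with hXG | hHX
  · exact below hXG
  · have eq_right : modular 0 c X = modular 0 c H := by
      rw [← sub_eq_zero, modular_sub_modular 0 c hHX]
      exact Finset.sum_eq_zero fun i hi => c_eq_zero i fun h =>
        (Finset.mem_sdiff.1 hi).2 (Finset.mem_sdiff.1 h).1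
    have := sum_covers_modular_sub flat_G (hτ.isFlat H hGH.right_mem) hGH.ssubset.1
      (modular_mem 0 c)
    simp only [below subset_rfl, sub_zero] at this
    rw [eq_right, ← this, Finset.sum_congr rfl c_eq, hsum]

variable [DecidableEq E]

variable (M) in
/-- The flats that extend `τ` to a longer flag. -/
noncomputable abbrev link (τ : Finset (Finset E)) : Finset (Finset E) :=
  linkVertices {τ | M.IsFlag τ} τ

theorem mem_link (hτ : M.IsFlag τ) :
    F ∈ M.link τ ↔ F ∉ τ ∧ M.IsFlat F ∧ ∀ X ∈ τ, X ⊆ F ∨ F ⊆ X := by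
  rw [mem_linkVertices, and_congr_right_iff]
  refine fun _ => ⟨fun h => ⟨h.isFlat F (by simp), fun X hX => ?_⟩, fun ⟨flat, comparable⟩ => ?_⟩
  · exact h.isChain.total (by simp [hX]) (by simp)
  · refine ⟨by simpa [flat] using hτ.isFlat, ?_, by simp [hτ.empty_mem], by simp [hτ.univ_mem]⟩
    rw [Finset.coe_insert]
    exact hτ.isChain.insert fun X hX _ => (comparable X hX).symm

theorem isFlat_of_mem_link (hτ : M.IsFlag τ) (hF : F ∈ M.link τ) : M.IsFlat F :=
  ((mem_link hτ).1 hF).2.1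

theorem mem_link_insert (hτ : M.IsFlag τ) (hF : F ∈ M.link τ) :
    G ∈ M.link (insert F τ) ↔ G ∈ M.link τ ∧ G ≠ F ∧ (F ⊆ G ∨ G ⊆ F) := by
  rw [mem_link (mem_linkVertices.1 hF).2, mem_link hτ]
  simp only [Finset.mem_insert, not_or, forall_eq_or_imp]
  tauto

theorem rank_mem_missingRanks (hτ : M.IsFlag τ) (hF : F ∈ M.link τ) :
    M.rank F ∈ M.missingRanks τ := by
  obtain ⟨hFτ, flat, comparable⟩ := (mem_link hτ).1 hF
  refine mem_missingRanks.2 ⟨rank_le_rank_univ flat, fun X hX hrank => ?_⟩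
  rcases comparable X hX with h | h
  · exact hFτ (eq_of_subset_of_rank_le (hτ.isFlat X hX) flat h hrank.ge ▸ hX)
  · exact hFτ (eq_of_subset_of_rank_le flat (hτ.isFlat X hX) h hrank.le ▸ hX)

theorem mem_link_of_ssubset (hτ : M.IsFlag τ) (hGH : IsConsecutive τ G H) (hF : M.IsFlat F)
    (hGF : G ⊂ F) (hFH : F ⊂ H) : F ∈ M.link τ := by
  refine (mem_link hτ).2 ⟨fun h => ?_, hF, fun X hX => ?_⟩
  · exact (hGH.subset_or_subset F h).elim hGF.not_subset hFH.not_subset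
  · exact (hGH.subset_or_subset X hX).imp (·.trans hGF.1) hFH.1.trans

theorem subset_or_subset_or_ssubset (hτ : M.IsFlag τ) (hGH : IsConsecutive τ G H)
    (hF : F ∈ M.link τ) : F ⊆ G ∨ H ⊆ F ∨ G ⊂ F ∧ F ⊂ H := by
  obtain ⟨hFτ, -, comparable⟩ := (mem_link hτ).1 hF
  rcases comparable G hGH.left_mem with hGF | hFG
  · rcases comparable H hGH.right_mem with hHF | hFH
    · exact .inr (.inl hHF)
    · exact .inr (.inr ⟨hGF.ssubset_of_ne (by rintro rfl; exact hFτ hGH.left_mem),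
        hFH.ssubset_of_ne (by rintro rfl; exact hFτ hGH.right_mem)⟩)
  · exact .inl hFG

theorem ssubset_of_mem_link (hτ : M.IsFlag τ) (hGH : IsConsecutive τ G H) (hF : F ∈ M.link τ)
    (hGF : M.rank G < M.rank F) (hFH : M.rank F < M.rank H) : G ⊂ F ∧ F ⊂ H := by
  have flat_F := isFlat_of_mem_link hτ hF
  refine ((subset_or_subset_or_ssubset hτ hGH hF).resolve_left fun h => ?_).resolve_left fun h => ?_
  · exact hGF.not_ge (rank_le_rank flat_F (hτ.isFlat G hGH.left_mem) h)
  · exact hFH.not_ge (rank_le_rank (hτ.isFlat H hGH.right_mem) flat_F h)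

theorem exists_isConsecutive_ssubset (hτ : M.IsFlag τ) (hF : F ∈ M.link τ) :
    ∃ G H, IsConsecutive τ G H ∧ G ⊂ F ∧ F ⊂ H := by
  obtain ⟨G, H, hGH, hGF, hFH⟩ := exists_isConsecutive_rank hτ (rank_mem_missingRanks hτ hF)
  exact ⟨G, H, hGH, ssubset_of_mem_link hτ hGH hF hGF hFH⟩

theorem exists_mem_link_rank_eq (hτ : M.IsFlag τ) (ha : a ∈ M.missingRanks τ) :
    ∃ F ∈ M.link τ, M.rank F = a := by
  obtain ⟨G, H, hGH, hGa, haH⟩ := exists_isConsecutive_rank hτ ha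
  obtain ⟨F, hF, rfl, hGF, hFH⟩ := exists_isFlat_rank_eq (hτ.isFlat G hGH.left_mem)
    (hτ.isFlat H hGH.right_mem) hGH.ssubset.1 hGa.le haH.le
  exact ⟨F, mem_link_of_ssubset hτ hGH hF (hGF.ssubset_of_ne (by rintro rfl; lia))
    (hFH.ssubset_of_ne (by rintro rfl; lia)), rfl⟩

theorem mem_covers_iff_mem_link (hτ : M.IsFlag τ) (hGH : IsConsecutive τ G H)
    (hrank : M.rank G + 1 < M.rank H) :
    F ∈ M.covers G H ↔ F ∈ M.link τ ∧ M.rank F = M.rank G + 1 := by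
  refine ⟨fun hF => ?_, fun ⟨hF, rank_F⟩ => ?_⟩
  · have rank_F := rank_of_mem_covers hF
    refine ⟨mem_link_of_ssubset hτ hGH (isFlat_of_mem_covers hF) (ssubset_of_mem_covers hF) ?_,
      rank_F⟩
    exact (subset_of_mem_covers hF).ssubset_of_ne (by rintro rfl; lia)
  · obtain ⟨hGF, hFH⟩ := ssubset_of_mem_link hτ hGH hF (by lia) (by lia)
    exact mem_covers.2 ⟨isFlat_of_mem_link hτ hF, rank_F, hGF.1, hFH.1⟩

theorem sum_link_eq_zero (hτ : M.IsFlag τ) (hcard : τ.card = M.rank Finset.univ)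
    {l : Finset E → ℝ} (hl : l ∈ modularFunctions E) (l_eq_zero : ∀ X ∈ τ, l X = 0) :
    ∑ F ∈ M.link τ, l F = 0 := by
  obtain ⟨a, ha⟩ := Finset.card_eq_one.1
    (show (M.missingRanks τ).card = 1 by have := card_missingRanks hτ; lia)
  obtain ⟨G, H, hGH, hGa, haH⟩ := exists_isConsecutive_rank hτ (a := a) (by simp [ha])
  have rank_a : M.rank G + 1 = a := by
    simpa [ha] using mem_missingRanks_of_lt hτ hGH (Nat.lt_succ_self _) (by lia)
  have link_eq : M.link τ = M.covers G H := by
    ext F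
    rw [mem_covers_iff_mem_link hτ hGH (by lia), iff_self_and, rank_a]
    intro hF
    simpa [ha] using rank_mem_missingRanks hτ hF
  have hG := l_eq_zero G hGH.left_mem
  have := sum_covers_modular_sub (hτ.isFlat G hGH.left_mem) (hτ.isFlat H hGH.right_mem)
    hGH.ssubset.1 hl
  simpa only [link_eq, hG, l_eq_zero H hGH.right_mem, sub_zero] using this

variable (M) in
/-- The Bergman fan of the matroid, in the coordinates where the flag `∅ ⊂ F₁ ⊂ ⋯ ⊂ Fₖ ⊂ E` stands
for the cone spanned by the indicator vectors of the `Fᵢ`. The vectors of `∅` and `E` span its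
lineality space, which is why the modular functions need not vanish at `E`. -/
def bergmanFan : BalancedFan (Finset E) where
  faces := {τ | M.IsFlag τ}
  dim := M.rank Finset.univ + 1
  linear := modularFunctions E
  ordConnected := ⟨fun _ hσ _ hρ _ hτ =>
    ⟨fun X hX => hρ.isFlat X (hτ.2 hX), hρ.isChain.mono (Finset.coe_subset.2 hτ.2),
      hτ.1 hσ.empty_mem, hτ.1 hσ.univ_mem⟩⟩
  exists_linear_eqOn _ hτ t :=
    let ⟨l, hl, l_eq, _⟩ := exists_modular_interpolation hτ.isChain hτ.empty_mem t
    ⟨l, hl, l_eq⟩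
  balanced _ hτ hcard _ hl l_eq_zero := sum_link_eq_zero hτ (Nat.succ_injective hcard) hl l_eq_zero

theorem isPure_bergmanFan : M.bergmanFan.IsPure := by
  intro τ hτ hcard
  have hcard' : τ.card < M.rank Finset.univ + 1 := hcard
  have missing_pos : 0 < (M.missingRanks τ).card := by have := card_missingRanks hτ; lia
  obtain ⟨a, ha⟩ := Finset.card_pos.1 missing_pos
  obtain ⟨F, hF, -⟩ := exists_mem_link_rank_eq hτ ha
  exact ⟨F, hF⟩

theorem isAmple_bergmanFan (ht : StrictlyConcaveOnChains t) : M.bergmanFan.IsAmple t := by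
  intro τ hτ
  obtain ⟨l, hl, l_eq, l_lt⟩ := ht.exists_modular_lt hτ.isChain hτ.empty_mem
  refine ⟨t - l, by rwa [sub_sub_cancel], fun F hF => by simp [l_eq F hF], fun F hF => ?_⟩
  obtain ⟨hFτ, -, comparable⟩ := (mem_link hτ).1 hF
  exact sub_pos.2 (l_lt F hFτ comparable ⟨_, hτ.univ_mem, F.subset_univ⟩)

/- In an interval of rank at least three any two flats are joined through the covers of `G` below
them. -/
theorem eq_of_mem_gap (hτ : M.IsFlag τ) (hGH : IsConsecutive τ G H)
    (hrank : M.rank G + 3 ≤ M.rank H) {g : Finset E → ℝ}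
    (hg : ∀ F ∈ M.link τ, ∀ F' ∈ M.link τ, F ⊆ F' → g F = g F') (hF : M.IsFlat F) (hGF : G ⊂ F)
    (hFH : F ⊂ H) (hX : M.IsFlat X) (hGX : G ⊂ X) (hXH : X ⊂ H) : g F = g X := by
  have flat_G := hτ.isFlat G hGH.left_mem
  have flat_H := hτ.isFlat H hGH.right_mem
  have mem_link {Y : Finset E} (hY : M.IsFlat Y) (hGY : G ⊂ Y) (hYH : Y ⊂ H) : Y ∈ M.link τ :=
    mem_link_of_ssubset hτ hGH hY hGY hYH
  have exists_cover {Y : Finset E} (hY : M.IsFlat Y) (hGY : G ⊂ Y) (hYH : Y ⊂ H) :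
      ∃ p ∈ M.covers G H, p ∈ M.link τ ∧ g Y = g p := by
    obtain ⟨p, hp⟩ := covers_nonempty flat_G hY hGY
    have hpY := subset_of_mem_covers hp
    have p_mem_link := mem_link (isFlat_of_mem_covers hp) (ssubset_of_mem_covers hp)
      (hpY.trans_ssubset hYH)
    obtain ⟨flat_p, rank_p, hGp, -⟩ := mem_covers.1 hp
    exact ⟨p, mem_covers.2 ⟨flat_p, rank_p, hGp, hpY.trans hYH.1⟩, p_mem_link,
      (hg p p_mem_link Y (mem_link hY hGY hYH) hpY).symm⟩
  obtain ⟨p, hp, p_mem_link, hgp⟩ := exists_cover hF hGF hFH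
  obtain ⟨q, hq, q_mem_link, hgq⟩ := exists_cover hX hGX hXH
  obtain ⟨J, flat_J, rank_J, hpJ, hqJ, hJH⟩ := exists_isFlat_of_mem_covers flat_G flat_H hp hq
  have J_mem_link := mem_link flat_J ((ssubset_of_mem_covers hp).trans_subset hpJ)
    (hJH.ssubset_of_ne (by rintro rfl; lia))
  rw [hgp, hgq, hg p p_mem_link J J_mem_link hpJ, hg q q_mem_link J J_mem_link hqJ]

theorem eq_of_mem_link (hτ : M.IsFlag τ) (hcard : 1 < (M.missingRanks τ).card) {g : Finset E → ℝ}
    (hg : ∀ F ∈ M.link τ, ∀ F' ∈ M.link τ, F ⊆ F' → g F = g F') (hF : F ∈ M.link τ)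
    (hG : G ∈ M.link τ) : g F = g G := by
  obtain ⟨A, B, hAB, hAF, hFB⟩ := exists_isConsecutive_ssubset hτ hF
  have flat_A := hτ.isFlat A hAB.left_mem
  have flat_B := hτ.isFlat B hAB.right_mem
  have flat_F := isFlat_of_mem_link hτ hF
  have rank_lt := M.rank_lt_rank flat_A flat_F hAF
  have rank_lt' := M.rank_lt_rank flat_F flat_B hFB
  rcases subset_or_subset_or_ssubset hτ hAB hG with hGA | hBG | ⟨hAG, hGB⟩
  · exact (hg G hG F hF (hGA.trans hAF.1)).symm
  · exact hg F hF G hG (hFB.1.trans hBG)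
  rcases le_or_gt (M.rank A + 3) (M.rank B) with hrank | hrank
  · exact eq_of_mem_gap hτ hAB hrank hg flat_F hAF hFB (isFlat_of_mem_link hτ hG) hAG hGB
  obtain ⟨c, hc, c_ne⟩ := Finset.exists_mem_ne hcard (M.rank F)
  obtain ⟨X, hX, rank_X⟩ := exists_mem_link_rank_eq hτ hc
  rcases subset_or_subset_or_ssubset hτ hAB hX with hXA | hBX | ⟨hAX, hXB⟩
  · rw [← hg X hX F hF (hXA.trans hAF.1), hg X hX G hG (hXA.trans hAG.1)]
  · rw [hg F hF X hX (hFB.1.trans hBX), hg G hG X hX (hGB.1.trans hBX)]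
  · have flat_X := isFlat_of_mem_link hτ hX
    have := M.rank_lt_rank flat_A flat_X hAX
    have := M.rank_lt_rank flat_X flat_B hXB
    lia

theorem isLinkConnected_bergmanFan : M.bergmanFan.IsLinkConnected := by
  intro τ hτ hcard g hg F hF G hG
  have hcard' : τ.card + 3 ≤ M.rank Finset.univ + 1 := hcard
  refine eq_of_mem_link hτ (by have := card_missingRanks hτ; lia) (fun X hX Y hY hXY => ?_) hF hG
  rcases eq_or_ne X Y with rfl | hne
  · rfl
  · exact hg X hX Y ((mem_link_insert hτ hX).2 ⟨hY, hne.symm, .inl hXY⟩)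

/- For consecutive `G ⊂ H` with `G ⊂ F ⊂ H` take the difference of the indicators of an element of
`F \ G` and an element of `H \ F`. -/
theorem exists_modular_of_mem_link (hτ : M.IsFlag τ) (hF : F ∈ M.link τ) :
    ∃ l ∈ modularFunctions E, (∀ X ∈ τ, l X = 0) ∧ l F = 1 ∧ ∀ Y ⊆ F, 0 ≤ l Y := by
  obtain ⟨G, H, hGH, hGF, hFH⟩ := exists_isConsecutive_ssubset hτ hF
  obtain ⟨i, hiF, hiG⟩ := Finset.exists_of_ssubset hGF
  obtain ⟨j, hjH, hjF⟩ := Finset.exists_of_ssubset hFH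
  refine ⟨modular 0 (Pi.single i 1) - modular 0 (Pi.single j 1),
    Submodule.sub_mem _ (modular_mem _ _) (modular_mem _ _), fun X hX => ?_, ?_, fun Y hY => ?_⟩
  · rcases hGH.subset_or_subset X hX with hXG | hHX
    · simp [modular_single, mt (@hXG i) hiG, mt (@hXG j) (mt (@hGF.1 j) hjF)]
    · simp [modular_single, hHX (hFH.1 hiF), hHX hjH]
  · simp [modular_single, hiF, hjF]
  · simp only [Pi.sub_apply, modular_single, if_neg (mt (@hY j) hjF), sub_zero]
    positivity

theorem mul_mixedDegree_insert_nonpos (hτ : M.IsFlag τ) (hcard : τ.card + 1 = M.rank Finset.univ)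
    {s : Finset E → ℝ} (hs : ∀ X ∈ τ, s X = 0) (hF : F ∈ M.link τ)
    (s_link : ∀ Y ∈ M.link (insert F τ), s Y = 0 ∧ Y ⊆ F) :
    s F * M.bergmanFan.mixedDegree [s] (insert F τ) ≤ 0 := by
  obtain ⟨l, hl, l_eq_zero, l_F, l_nonneg⟩ := exists_modular_of_mem_link hτ hF
  have degree_eq : M.bergmanFan.mixedDegree [s] (insert F τ) =
      ∑ Y ∈ M.link (insert F τ), (s - s F • l) Y * 1 := by
    refine BalancedFan.mixedDegree_cons_eq_sum (mem_linkVertices.1 hF).2 ?_ ?_ ?_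
    · rw [BalancedFan.card_insert_of_mem_link (B := M.bergmanFan) hF]
      simpa [bergmanFan] using hcard
    · rw [sub_sub_cancel]
      exact Submodule.smul_mem _ _ hl
    · simp +contextual [hs, l_eq_zero, l_F]
  have sum_eq : ∑ Y ∈ M.link (insert F τ), (s - s F • l) Y * 1 =
      -(s F * ∑ Y ∈ M.link (insert F τ), l Y) := by
    rw [Finset.mul_sum, ← Finset.sum_neg_distrib]
    exact Finset.sum_congr rfl fun Y hY => by simp [(s_link Y hY).1]
  have sum_nonneg : 0 ≤ ∑ Y ∈ M.link (insert F τ), l Y :=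
    Finset.sum_nonneg fun Y hY => l_nonneg Y (s_link Y hY).2
  rw [degree_eq, sum_eq, mul_neg, ← mul_assoc]
  exact neg_nonpos.2 (mul_nonneg (mul_self_nonneg _) sum_nonneg)

theorem mixedDegree_self_nonpos (hτ : M.IsFlag τ) (hcard : τ.card + 1 = M.rank Finset.univ)
    (ht : ∀ X ∈ τ, t X = 0)
    (hlink : ∀ F ∈ M.link τ, t F ≠ 0 → ∀ Y ∈ M.link (insert F τ), t Y = 0 ∧ Y ⊆ F) :
    M.bergmanFan.mixedDegree [t, t] τ ≤ 0 := by
  have dim_eq : τ.card + [t].length + 1 = M.bergmanFan.dim := by simpa [bergmanFan] using hcard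
  rw [BalancedFan.mixedDegree_cons_eq_sum hτ dim_eq (by simp) ht]
  refine Finset.sum_nonpos fun F hF => ?_
  rcases eq_or_ne (t F) 0 with h | h
  · rw [h, zero_mul]
  · exact mul_mixedDegree_insert_nonpos hτ hcard ht hF (hlink F hF h)

/- Only two ranks `a < b` are missing. A class with vanishing sum over the flats of rank `a` in the
link is represented by a function supported on the flats of rank `b`. -/
theorem hodgeIndex_bergmanFan_nil (hτ : M.IsFlag τ) (hcard : τ.card + 1 = M.rank Finset.univ) :
    M.bergmanFan.HodgeIndex [] τ := by
  obtain ⟨a, b, hab, missing_eq⟩ := exists_missingRanks_eq_pair hτ hcard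
  obtain ⟨G, H, hGH, hGa, haH⟩ := exists_isConsecutive_rank hτ (a := a) (by simp [missing_eq])
  have rank_a : M.rank G + 1 = a := by
    have := mem_missingRanks_of_lt hτ hGH (Nat.lt_succ_self _) (by lia)
    simp only [missing_eq, Finset.mem_insert, Finset.mem_singleton] at this
    lia
  have rank_of_mem_link {F : Finset E} (hF : F ∈ M.link τ) : M.rank F = a ∨ M.rank F = b := by
    simpa [missing_eq] using rank_mem_missingRanks hτ hF
  have mem_covers_of_rank {F : Finset E} (hF : F ∈ M.link τ) (h : M.rank F = a) :
      F ∈ M.covers G H := (mem_covers_iff_mem_link hτ hGH (by lia)).2 ⟨hF, by lia⟩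
  have dim_eq : τ.card + ([] : List (Finset E → ℝ)).length + 2 = M.bergmanFan.dim := by
    simpa [bergmanFan] using hcard
  refine BalancedFan.hodgeIndex_of_nonpos_on_ker isPure_bergmanFan (by simp) hτ dim_eq
    (∑ p ∈ M.covers G H, LinearMap.proj p) fun t ht hsum => ?_
  obtain ⟨l, hl, l_eq_zero, l_eq⟩ :=
    exists_modular_eqOn_covers_of_sum_eq_zero hτ hGH (by simpa using hsum)
  have hts : t - (t - l) ∈ M.bergmanFan.linear := by rwa [sub_sub_cancel]
  rw [BalancedFan.mixedDegree_cons_cons_congr hτ dim_eq hts hts]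
  have covers_eq_zero {p : Finset E} (hp : p ∈ M.covers G H) : (t - l) p = 0 := by simp [l_eq p hp]
  refine mixedDegree_self_nonpos hτ hcard (fun X hX => by simp [ht X hX, l_eq_zero X hX])
    fun F hF hne Y hY => ?_
  have rank_F : M.rank F = b := (rank_of_mem_link hF).resolve_left
    fun h => hne (covers_eq_zero (mem_covers_of_rank hF h))
  obtain ⟨hY, hYF, comparable⟩ := (mem_link_insert hτ hF).1 hY
  have flat_F := isFlat_of_mem_link hτ hF
  have flat_Y := isFlat_of_mem_link hτ hY
  have rank_Y : M.rank Y = a := (rank_of_mem_link hY).resolve_right fun h => hYF <|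
    comparable.elim (fun h' => (eq_of_subset_of_rank_le flat_F flat_Y h' (by lia)).symm)
      fun h' => eq_of_subset_of_rank_le flat_Y flat_F h' (by lia)
  refine ⟨covers_eq_zero (mem_covers_of_rank hY rank_Y), comparable.resolve_left fun h => ?_⟩
  have := rank_le_rank flat_F flat_Y h
  lia

theorem hodgeIndex_bergmanFan {ts : List (Finset E → ℝ)}
    (hts : ∀ t ∈ ts, StrictlyConcaveOnChains t) (hτ : M.IsFlag τ)
    (hcard : τ.card + ts.length + 1 = M.rank Finset.univ) : M.bergmanFan.HodgeIndex ts τ :=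
  BalancedFan.hodgeIndex isPure_bergmanFan isLinkConnected_bergmanFan
    (fun _ hτ hcard => hodgeIndex_bergmanFan_nil hτ (Nat.succ_injective hcard))
    (fun t ht => isAmple_bergmanFan (hts t ht)) hτ (congrArg Nat.succ hcard)

end RankedFlats

/-! ### The Möbius function and mixed degrees -/

namespace RankedFlats

variable {E : Type*} [Fintype E] {M : RankedFlats E} {F G H : Finset E} {i : E} {k : ℕ}

section Adjoin

variable (M) in
open Classical in
/-- The least flat containing the flat `G` and the element `i`. -/
noncomputable def adjoin (i : E) (G : Finset E) : Finset E :=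
  if h : M.IsFlat G ∧ i ∉ G then (M.exists_cover h.1 h.2).choose else G

theorem adjoin_of_mem (hi : i ∈ G) : M.adjoin i G = G := dif_neg fun h => h.2 hi

theorem adjoin_spec (hG : M.IsFlat G) (hi : i ∉ G) :
    M.IsFlat (M.adjoin i G) ∧ M.rank (M.adjoin i G) = M.rank G + 1 ∧ G ⊆ M.adjoin i G ∧
      i ∈ M.adjoin i G ∧ ∀ H, M.IsFlat H → G ⊆ H → i ∈ H → M.adjoin i G ⊆ H := by
  rw [adjoin, dif_pos ⟨hG, hi⟩]
  exact (M.exists_cover hG hi).choose_spec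

theorem isFlat_adjoin (hG : M.IsFlat G) : M.IsFlat (M.adjoin i G) := by
  by_cases hi : i ∈ G
  · rwa [adjoin_of_mem hi]
  · exact (adjoin_spec hG hi).1

theorem subset_adjoin (hG : M.IsFlat G) : G ⊆ M.adjoin i G := by
  by_cases hi : i ∈ G
  · rw [adjoin_of_mem hi]
  · exact (adjoin_spec hG hi).2.2.1

theorem mem_adjoin (hG : M.IsFlat G) : i ∈ M.adjoin i G := by
  by_cases hi : i ∈ G
  · rwa [adjoin_of_mem hi]
  · exact (adjoin_spec hG hi).2.2.2.1

theorem adjoin_subset (hG : M.IsFlat G) (hH : M.IsFlat H) (h : G ⊆ H) (hi : i ∈ H) :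
    M.adjoin i G ⊆ H := by
  by_cases hiG : i ∈ G
  · rwa [adjoin_of_mem hiG]
  · exact (adjoin_spec hG hiG).2.2.2.2 H hH h hi

theorem rank_adjoin (hG : M.IsFlat G) (hi : i ∉ G) : M.rank (M.adjoin i G) = M.rank G + 1 :=
  (adjoin_spec hG hi).2.1

variable (M) in
open Classical in
/-- The flats covered by `F` in the lattice of flats that do not contain `i`. -/
noncomputable def coveredAvoiding (F : Finset E) (i : E) : Finset (Finset E) :=
  {G | M.IsFlat G ∧ i ∉ G ∧ G ⊆ F ∧ M.rank G + 1 = M.rank F}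

theorem mem_coveredAvoiding : G ∈ M.coveredAvoiding F i ↔
    M.IsFlat G ∧ i ∉ G ∧ G ⊆ F ∧ M.rank G + 1 = M.rank F := by
  simp [coveredAvoiding]

theorem mem_coveredAvoiding_iff_adjoin_eq (hF : M.IsFlat F) (hi : i ∈ F) :
    G ∈ M.coveredAvoiding F i ↔ M.IsFlat G ∧ i ∉ G ∧ M.adjoin i G = F := by
  rw [mem_coveredAvoiding]
  refine and_congr_right fun hG => and_congr_right fun hiG => ⟨fun ⟨hGF, hrank⟩ => ?_, ?_⟩
  · exact eq_of_subset_of_rank_le (isFlat_adjoin hG) hF (adjoin_subset hG hF hGF hi)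
      (by rw [rank_adjoin hG hiG, hrank])
  · rintro rfl
    exact ⟨subset_adjoin hG, (rank_adjoin hG hiG).symm⟩

/- A maximal flat of `F` avoiding `i` is covered by `F`: otherwise adjoining an element outside its
join with `i` would give a larger one. -/
theorem coveredAvoiding_nonempty (hF : M.IsFlat F) (hi : i ∈ F) :
    (M.coveredAvoiding F i).Nonempty := by
  classical
  obtain ⟨G, hG, G_max⟩ := Finset.exists_max_image {G | M.IsFlat G ∧ i ∉ G ∧ G ⊆ F} M.rank
    ⟨∅, by simp [M.isFlat_empty]⟩
  simp only [Finset.mem_filter_univ] at hG G_max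
  obtain ⟨hG, hiG, hGF⟩ := hG
  refine ⟨G, (mem_coveredAvoiding_iff_adjoin_eq hF hi).2 ⟨hG, hiG, ?_⟩⟩
  by_contra hne
  obtain ⟨j, hjF, hj⟩ :=
    Finset.exists_of_ssubset ((adjoin_subset hG hF hGF hi).ssubset_of_ne hne)
  have hjG : j ∉ G := fun h => hj (subset_adjoin hG h)
  have hi_adjoin : i ∉ M.adjoin j G := fun h => hj <| by
    have heq := eq_of_subset_of_rank_le (isFlat_adjoin hG) (isFlat_adjoin hG)
      (adjoin_subset hG (isFlat_adjoin hG) (subset_adjoin hG) h)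
      (by rw [rank_adjoin hG hiG, rank_adjoin hG hjG])
    exact heq ▸ mem_adjoin hG
  have := G_max _ ⟨isFlat_adjoin hG, hi_adjoin, adjoin_subset hG hF hGF hjF⟩
  rw [rank_adjoin hG hjG] at this
  lia

end Adjoin

variable (M) in
open Classical in
/-- The value `μ(∅, F)` of the Möbius function of the lattice of flats, extended by zero to sets
that are not flats. -/
noncomputable def mobius (F : Finset E) : ℤ :=
  letI : LocallyFiniteOrder {F // M.IsFlat F} := Fintype.toLocallyFiniteOrder
  if hF : M.IsFlat F then
    (IncidenceAlgebra.mu ℤ : IncidenceAlgebra ℤ {F // M.IsFlat F}) ⟨∅, M.isFlat_empty⟩ ⟨F, hF⟩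
  else 0

theorem mobius_empty : M.mobius ∅ = 1 := by
  simp [mobius, M.isFlat_empty]

open Classical in
theorem sum_mobius (hF : M.IsFlat F) :
    ∑ G with M.IsFlat G ∧ G ⊆ F, M.mobius G = if F = ∅ then 1 else 0 := by
  let : LocallyFiniteOrder {F // M.IsFlat F} := Fintype.toLocallyFiniteOrder
  have sum_Icc := IncidenceAlgebra.sum_Icc_mu_right (𝕜 := ℤ)
    (⟨∅, M.isFlat_empty⟩ : {F // M.IsFlat F}) ⟨F, hF⟩
  simp only [Subtype.mk.injEq, eq_comm (a := ∅)] at sum_Icc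
  rw [← sum_Icc]
  refine (Finset.sum_bij (fun G _ => G.1) (fun G hG => ?_) (fun _ _ _ _ => Subtype.ext) ?_ ?_).symm
  · exact Finset.mem_filter_univ _ |>.2 ⟨G.2, (Finset.mem_Icc.1 hG).2⟩
  · intro G hG
    obtain ⟨hG, hGF⟩ := (Finset.mem_filter_univ _).1 hG
    exact ⟨⟨G, hG⟩, Finset.mem_Icc.2 ⟨Finset.empty_subset G, hGF⟩, rfl⟩
  · intro G _
    rw [mobius, dif_pos G.2]

open Classical in
/- Weisner's theorem: the fibres of `M.adjoin i` over the flats `G ⊆ F` containing `i` partition the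
flats below `F`, so induction on `F` leaves only the fibre over `F` itself. -/
theorem sum_mobius_adjoin_eq (hF : M.IsFlat F) (hi : i ∈ F) :
    ∑ G with M.IsFlat G ∧ M.adjoin i G = F, M.mobius G = 0 := by
  induction F using Finset.strongInduction with
  | H F ih =>
    have maps_to : ∀ G ∈ ({G | M.IsFlat G ∧ G ⊆ F} : Finset (Finset E)),
        M.adjoin i G ∈ ({G | M.IsFlat G ∧ i ∈ G ∧ G ⊆ F} : Finset (Finset E)) := by
      simp only [Finset.mem_filter_univ]
      exact fun G hG => ⟨isFlat_adjoin hG.1, mem_adjoin hG.1, adjoin_subset hG.1 hF hG.2 hi⟩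
    have fiber_eq : ∀ H ⊆ F, ({G | M.IsFlat G ∧ G ⊆ F} : Finset (Finset E)).filter
        (M.adjoin i · = H) = ({G | M.IsFlat G ∧ M.adjoin i G = H} : Finset (Finset E)) := by
      intro H hHF
      ext G
      simp only [Finset.mem_filter, Finset.mem_univ, true_and]
      exact ⟨fun h => ⟨h.1.1, h.2⟩,
        fun h => ⟨⟨h.1, (subset_adjoin h.1).trans (h.2.trans_subset hHF)⟩, h.2⟩⟩
    have sum_fibers := Finset.sum_fiberwise_of_maps_to maps_to M.mobius
    rw [sum_mobius hF, if_neg (Finset.ne_empty_of_mem hi),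
      Finset.sum_eq_single_of_mem F (by simp [hF, hi]), fiber_eq F subset_rfl] at sum_fibers
    · exact sum_fibers
    · intro H hH hne
      obtain ⟨hH, hiH, hHF⟩ := (Finset.mem_filter_univ _).1 hH
      rw [fiber_eq H hHF, ih H (hHF.ssubset_of_ne hne) hH hiH]

theorem mobius_eq_neg_sum_coveredAvoiding (hF : M.IsFlat F) (hi : i ∈ F) :
    M.mobius F = -∑ G ∈ M.coveredAvoiding F i, M.mobius G := by
  classical
  have fiber_eq : ({G | M.IsFlat G ∧ M.adjoin i G = F} : Finset (Finset E)) =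
      insert F (M.coveredAvoiding F i) := by
    ext G
    rw [Finset.mem_filter_univ, Finset.mem_insert, mem_coveredAvoiding_iff_adjoin_eq hF hi]
    by_cases hiG : i ∈ G
    · simp only [hiG, not_true_eq_false, false_and, and_false, or_false, adjoin_of_mem]
      exact ⟨And.right, fun h => ⟨h ▸ hF, h⟩⟩
    · have : G ≠ F := fun h => hiG (h ▸ hi)
      simp [hiG, this]
  have hnot : F ∉ M.coveredAvoiding F i := fun h => (mem_coveredAvoiding.1 h).2.1 hi
  have weisner := sum_mobius_adjoin_eq hF hi
  rw [fiber_eq, Finset.sum_insert hnot] at weisner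
  exact eq_neg_of_add_eq_zero_left weisner

variable (M) in
/-- The absolute value of the Möbius function: the Möbius function of a lattice of flats alternates
in sign with the rank. -/
noncomputable def unsignedMobius (F : Finset E) : ℝ := (-1) ^ M.rank F * M.mobius F

theorem unsignedMobius_empty : M.unsignedMobius ∅ = 1 := by
  simp [unsignedMobius, M.rank_empty, mobius_empty]

theorem unsignedMobius_eq_sum_coveredAvoiding (hF : M.IsFlat F) (hi : i ∈ F) :
    M.unsignedMobius F = ∑ G ∈ M.coveredAvoiding F i, M.unsignedMobius G := by
  rw [unsignedMobius, mobius_eq_neg_sum_coveredAvoiding hF hi, Int.cast_neg, Int.cast_sum,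
    mul_neg, Finset.mul_sum, ← Finset.sum_neg_distrib]
  refine Finset.sum_congr rfl fun G hG => ?_
  rw [unsignedMobius, ← (mem_coveredAvoiding.1 hG).2.2.2]
  ring

theorem unsignedMobius_of_rank_eq_one (hF : M.IsFlat F) (hrank : M.rank F = 1) :
    M.unsignedMobius F = 1 := by
  obtain ⟨i, hi⟩ : F.Nonempty := by
    rw [Finset.nonempty_iff_ne_empty]
    rintro rfl
    simp [M.rank_empty] at hrank
  have covered_eq : M.coveredAvoiding F i = {∅} := by
    ext G
    rw [mem_coveredAvoiding, Finset.mem_singleton, hrank]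
    constructor
    · rintro ⟨hG, -, -, rank_G⟩
      exact (eq_of_subset_of_rank_le M.isFlat_empty hG G.empty_subset (by lia)).symm
    · rintro rfl
      simp [M.isFlat_empty, M.rank_empty]
  rw [unsignedMobius_eq_sum_coveredAvoiding hF hi, covered_eq, Finset.sum_singleton,
    unsignedMobius_empty]

theorem unsignedMobius_pos (hF : M.IsFlat F) : 0 < M.unsignedMobius F := by
  induction F using Finset.strongInduction with
  | H F ih =>
    obtain rfl | ⟨i, hi⟩ := F.eq_empty_or_nonempty
    · rw [unsignedMobius_empty]
      exact one_pos
    · rw [unsignedMobius_eq_sum_coveredAvoiding hF hi]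
      refine Finset.sum_pos (fun G hG => ?_) (coveredAvoiding_nonempty hF hi)
      obtain ⟨hG, hiG, hGF, -⟩ := mem_coveredAvoiding.1 hG
      exact ih G (hGF.ssubset_of_ne fun h => hiG (h ▸ hi)) hG

end RankedFlats

section Concave

variable {E : Type*} {t : Finset E → ℝ}

/-- The property that `t F` lies weakly above the linear interpolation of `t L` and `t T` in the
cardinality, whenever `L ⊂ F ⊂ T`. -/
def ConcaveOnChains (t : Finset E → ℝ) : Prop :=
  ∀ ⦃L F T : Finset E⦄, L ⊂ F → F ⊂ T →
    (T.card - F.card : ℝ) * t L + (F.card - L.card : ℝ) * t T ≤ (T.card - L.card : ℝ) * t F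

theorem ConcaveOnChains.add_strictly {s : Finset E → ℝ} (ht : ConcaveOnChains t)
    (hs : StrictlyConcaveOnChains s) : StrictlyConcaveOnChains (t + s) := by
  intro L F T hLF hFT
  simp only [Pi.add_apply, mul_add]
  linarith [ht hLF hFT, hs hLF hFT]

theorem strictlyConcaveOnChains_neg_card_sq {x : ℝ} (hx : 0 < x) :
    StrictlyConcaveOnChains fun F : Finset E => -x * (F.card : ℝ) ^ 2 := by
  intro L F T hLF hFT
  have hLF' : (L.card : ℝ) < F.card := mod_cast Finset.card_lt_card hLF
  have hFT' : (F.card : ℝ) < T.card := mod_cast Finset.card_lt_card hFT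
  have : 0 < x * ((T.card - F.card) * (F.card - L.card) * (T.card - L.card) : ℝ) :=
    mul_pos hx (mul_pos (mul_pos (by linarith) (by linarith)) (by linarith))
  linarith

theorem concaveOnChains_of_nonpos (nonpos : ∀ F, t F ≤ 0)
    (eq_zero : ∀ ⦃L F T⦄, L ⊂ F → F ⊂ T → t F = 0) : ConcaveOnChains t := by
  intro L F T hLF hFT
  have hLF' : (L.card : ℝ) < F.card := mod_cast Finset.card_lt_card hLF
  have hFT' : (F.card : ℝ) < T.card := mod_cast Finset.card_lt_card hFT
  rw [eq_zero hLF hFT, mul_zero]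
  exact add_nonpos (mul_nonpos_of_nonneg_of_nonpos (by linarith) (nonpos L))
    (mul_nonpos_of_nonneg_of_nonpos (by linarith) (nonpos T))

open Classical in
/-- The class `α` of Adiprasito, Huh and Katz, represented by a function supported at the top flat:
adding the modular function `F ↦ [i ∈ F]` gives the usual representative `∑ x_F` over the proper
flats `F ∋ i`. -/
noncomputable def alphaClass (E : Type*) [Fintype E] (F : Finset E) : ℝ :=
  if F = Finset.univ then -1 else 0

open Classical in
/-- The class `β` of Adiprasito, Huh and Katz, represented by a function supported at the bottom
flat: adding the modular function `F ↦ [i ∉ F]` gives the usual representative `∑ x_F` over the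
nonempty flats `F ∌ i`. -/
noncomputable def betaClass (E : Type*) (F : Finset E) : ℝ := if F = ∅ then -1 else 0

theorem concaveOnChains_alphaClass [Fintype E] : ConcaveOnChains (alphaClass E) := by
  refine concaveOnChains_of_nonpos (fun F => ?_) fun L F T _ hFT => ?_
  · rw [alphaClass]
    split_ifs <;> norm_num
  · exact if_neg fun h : F = Finset.univ => hFT.not_subset (h ▸ T.subset_univ)

theorem concaveOnChains_betaClass : ConcaveOnChains (betaClass E) := by
  refine concaveOnChains_of_nonpos (fun F => ?_) fun L F T hLF _ => ?_
  · rw [betaClass]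
    split_ifs <;> norm_num
  · exact if_neg fun h : F = ∅ => hLF.not_subset (h ▸ L.empty_subset)

end Concave

namespace RankedFlats

variable {E : Type*} [Fintype E] {M : RankedFlats E} {τ : Finset (Finset E)}

open Classical in
/- The functions `t - x |·|²` with `x > 0` are strictly concave on chains; let `x` tend to zero. -/
theorem mixedDegree_mul_le_sq {ts : List (Finset E → ℝ)} (hts : ∀ t ∈ ts, ConcaveOnChains t)
    (hτ : M.IsFlag τ) (hcard : τ.card + ts.length + 1 = M.rank Finset.univ) {f : Finset E → ℝ}
    (hf : ConcaveOnChains f) (s : Finset E → ℝ) :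
    M.bergmanFan.mixedDegree (s :: s :: ts) τ * M.bergmanFan.mixedDegree (f :: f :: ts) τ ≤
      M.bergmanFan.mixedDegree (s :: f :: ts) τ ^ 2 := by
  let perturb (t : Finset E → ℝ) (x : ℝ) : Finset E → ℝ := t + fun F => -x * (F.card : ℝ) ^ 2
  have perturb_zero (t) : perturb t 0 = t := by ext; simp [perturb]
  have continuous_perturb (t) : Continuous (perturb t) := by fun_prop
  have strictly_concave {t} (ht : ConcaveOnChains t) {x : ℝ} (hx : 0 < x) :
      StrictlyConcaveOnChains (perturb t x) :=
    ht.add_strictly (strictlyConcaveOnChains_neg_card_sq hx)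
  have continuous_degree (fs : List (ℝ → Finset E → ℝ)) (hfs : ∀ f ∈ fs, Continuous f) :
      Continuous fun x => M.bergmanFan.mixedDegree
        (fs.map (fun f => f x) ++ ts.map (perturb · x)) τ := by
    simpa [Function.comp_def] using BalancedFan.continuous_mixedDegree (B := M.bergmanFan)
      (fs ++ ts.map perturb) (by simpa [or_imp, forall_and, continuous_perturb] using hfs) τ
  have le_of_pos : ∀ x ∈ Set.Ioi (0 : ℝ), _ := fun x hx =>
    hodgeIndex_bergmanFan (ts := ts.map (perturb · x))
      (by simpa using fun t ht => strictly_concave (hts t ht) hx) hτ (by simpa using hcard)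
      s (perturb f x) (isAmple_bergmanFan (strictly_concave hf hx))
  have := le_on_closure le_of_pos
    ((continuous_degree [fun _ => s, fun _ => s] (by simp [continuous_const])).mul
      (continuous_degree [perturb f, perturb f] (by simp [continuous_perturb]))).continuousOn
    ((continuous_degree [fun _ => s, perturb f]
      (by simp [continuous_const, continuous_perturb])).pow 2).continuousOn
    (x := 0) (by simp [closure_Ioi])
  simpa [perturb_zero] using this

end RankedFlats

namespace IsConsecutive

variable {E : Type*} [DecidableEq E] {τ : Finset (Finset E)} {F G H : Finset E}

theorem insert_of_subset_or_subset (h : IsConsecutive τ G H) (hF : F ⊆ G ∨ H ⊆ F) :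
    IsConsecutive (insert F τ) G H where
  left_mem := Finset.mem_insert_of_mem h.left_mem
  right_mem := Finset.mem_insert_of_mem h.right_mem
  ssubset := h.ssubset
  subset_or_subset := by simpa [hF] using h.subset_or_subset

theorem insert_left (h : IsConsecutive τ G H) (hGF : G ⊂ F) (hFH : F ⊂ H) :
    IsConsecutive (insert F τ) G F where
  left_mem := Finset.mem_insert_of_mem h.left_mem
  right_mem := Finset.mem_insert_self F τ
  ssubset := hGF
  subset_or_subset := by
    simpa using fun X hX => (h.subset_or_subset X hX).imp_right hFH.1.trans

theorem insert_right (h : IsConsecutive τ G H) (hGF : G ⊂ F) (hFH : F ⊂ H) :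
    IsConsecutive (insert F τ) F H where
  left_mem := Finset.mem_insert_self F τ
  right_mem := Finset.mem_insert_of_mem h.right_mem
  ssubset := hFH
  subset_or_subset := by
    simpa using fun X hX => (h.subset_or_subset X hX).imp_left (·.trans hGF.1)

end IsConsecutive

namespace RankedFlats

variable {E : Type*} [Fintype E] {M : RankedFlats E} {τ : Finset (Finset E)} {F G H : Finset E}
  {i : E} {j k n : ℕ} {ts : List (Finset E → ℝ)}

theorem rank_le_of_isConsecutive (hτ : M.IsFlag τ) (hcard : τ.card + n = M.rank Finset.univ + 1)
    (hGH : IsConsecutive τ G H) : M.rank H ≤ M.rank G + n + 1 := by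
  have subset_missing : Finset.Ioo (M.rank G) (M.rank H) ⊆ M.missingRanks τ := fun a ha =>
    mem_missingRanks_of_lt hτ hGH (Finset.mem_Ioo.1 ha).1 (Finset.mem_Ioo.1 ha).2
  have := Finset.card_le_card subset_missing
  rw [Nat.card_Ioo] at this
  have := card_missingRanks hτ
  lia

theorem rank_add_rank_le_of_isConsecutive {G' H' : Finset E} (hτ : M.IsFlag τ)
    (hcard : τ.card + n = M.rank Finset.univ + 1) (hGH : IsConsecutive τ G H)
    (hGH' : IsConsecutive τ G' H') (h : H ⊆ G') :
    M.rank H + M.rank H' ≤ M.rank G + M.rank G' + n + 2 := by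
  have rank_le : M.rank H ≤ M.rank G' :=
    rank_le_rank (hτ.isFlat H hGH.right_mem) (hτ.isFlat G' hGH'.left_mem) h
  have disjoint : Disjoint (Finset.Ioo (M.rank G) (M.rank H))
      (Finset.Ioo (M.rank G') (M.rank H')) :=
    Finset.disjoint_left.2 fun a ha ha' => by
      rw [Finset.mem_Ioo] at ha ha'
      lia
  have subset_missing : Finset.Ioo (M.rank G) (M.rank H) ∪ Finset.Ioo (M.rank G') (M.rank H') ⊆
      M.missingRanks τ := by
    refine Finset.union_subset (fun a ha => ?_) fun a ha => ?_ <;> rw [Finset.mem_Ioo] at ha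
    · exact mem_missingRanks_of_lt hτ hGH ha.1 ha.2
    · exact mem_missingRanks_of_lt hτ hGH' ha.1 ha.2
  have := Finset.card_le_card subset_missing
  rw [Finset.card_union_of_disjoint disjoint, Nat.card_Ioo, Nat.card_Ioo] at this
  have := card_missingRanks hτ
  lia

variable [DecidableEq E]

theorem mixedDegree_alphaClass_cons (hτ : M.IsFlag τ)
    (hcard : τ.card + ts.length = M.rank Finset.univ) (hH : IsConsecutive τ H Finset.univ)
    (hi : i ∉ H) : M.bergmanFan.mixedDegree (alphaClass E :: ts) τ =
      ∑ F ∈ M.link τ with i ∈ F, M.bergmanFan.mixedDegree ts (insert F τ) := by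
  have alpha_add (F : Finset E) (hF : F ≠ Finset.univ) :
      (alphaClass E + modular 0 (Pi.single i 1)) F = if i ∈ F then 1 else 0 := by
    simp [alphaClass, hF, modular_single]
  rw [BalancedFan.mixedDegree_cons_eq_sum hτ (by simpa [bergmanFan] using hcard)
    (s := alphaClass E + modular 0 (Pi.single i 1)), Finset.sum_filter]
  · refine Finset.sum_congr rfl fun F hF => ?_
    rw [alpha_add F fun h => ((mem_link hτ).1 hF).1 (h ▸ hτ.univ_mem), ite_mul, one_mul, zero_mul]
  · rw [sub_add_cancel_left]
    exact Submodule.neg_mem _ (modular_mem _ _)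
  · intro X hX
    by_cases hX' : X = Finset.univ
    · simp [hX', alphaClass, modular_single]
    · rw [alpha_add X hX', if_neg]
      exact fun h => ((hH.subset_or_subset X hX).resolve_right
        fun h' => hX' (Finset.univ_subset_iff.1 h')) h |> hi

theorem mixedDegree_betaClass_cons (hτ : M.IsFlag τ)
    (hcard : τ.card + ts.length = M.rank Finset.univ) (hG : IsConsecutive τ ∅ G)
    (hi : i ∈ G) : M.bergmanFan.mixedDegree (betaClass E :: ts) τ =
      ∑ F ∈ M.link τ with i ∉ F, M.bergmanFan.mixedDegree ts (insert F τ) := by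
  have beta_add (F : Finset E) (hF : F ≠ ∅) :
      (betaClass E + modular 1 (-Pi.single i 1)) F = if i ∉ F then 1 else 0 := by
    by_cases hiF : i ∈ F <;> simp [betaClass, hF, modular, Pi.single_apply, hiF]
  rw [BalancedFan.mixedDegree_cons_eq_sum hτ (by simpa [bergmanFan] using hcard)
    (s := betaClass E + modular 1 (-Pi.single i 1)), Finset.sum_filter]
  · refine Finset.sum_congr rfl fun F hF => ?_
    rw [beta_add F fun h => ((mem_link hτ).1 hF).1 (h ▸ hτ.empty_mem), ite_mul, one_mul, zero_mul]
  · rw [sub_add_cancel_left]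
    exact Submodule.neg_mem _ (modular_mem _ _)
  · intro X hX
    by_cases hX' : X = ∅
    · simp [hX', betaClass, modular]
    · rw [beta_add X hX', if_neg]
      exact not_not.2 (((hG.subset_or_subset X hX).resolve_left
        fun h => hX' (Finset.subset_empty.1 h)) hi)

theorem adjoin_mem_link (hτ : M.IsFlag τ) (hH : IsConsecutive τ H Finset.univ) (hi : i ∉ H)
    (hrank : M.rank H + 1 < M.rank Finset.univ) : M.adjoin i H ∈ M.link τ := by
  have flat_H := hτ.isFlat H hH.left_mem
  refine mem_link_of_ssubset hτ hH (isFlat_adjoin flat_H)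
    ((subset_adjoin flat_H).ssubset_of_ne fun h => hi (h ▸ mem_adjoin flat_H))
    (Finset.ssubset_univ_iff.2 fun h => ?_)
  rw [← rank_adjoin flat_H hi, h] at hrank
  exact hrank.false

theorem ssubset_of_mem_link_of_mem (hτ : M.IsFlag τ) (hH : IsConsecutive τ H Finset.univ)
    (hi : i ∉ H) (hF : F ∈ M.link τ) (hiF : i ∈ F) : H ⊂ F ∧ F ⊂ Finset.univ := by
  rcases subset_or_subset_or_ssubset hτ hH hF with h | h | h
  · exact absurd (h hiF) hi
  · exact absurd (Finset.univ_subset_iff.1 h ▸ hτ.univ_mem) ((mem_link hτ).1 hF).1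
  · exact h

theorem ssubset_of_mem_link_of_notMem (hτ : M.IsFlag τ) (hG : IsConsecutive τ ∅ G) (hi : i ∈ G)
    (hF : F ∈ M.link τ) (hiF : i ∉ F) : ∅ ⊂ F ∧ F ⊂ G := by
  rcases subset_or_subset_or_ssubset hτ hG hF with h | h | h
  · exact absurd (Finset.subset_empty.1 h ▸ hτ.empty_mem) ((mem_link hτ).1 hF).1
  · exact absurd (h hi) hiF
  · exact h

theorem coveredAvoiding_eq_filter_link (hτ : M.IsFlag τ) (hG : IsConsecutive τ ∅ G)
    (hi : i ∈ G) (hrank : M.rank G = k + 2) :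
    M.coveredAvoiding G i = {F ∈ M.link τ | i ∉ F ∧ M.rank F = k + 1} := by
  ext F
  rw [mem_coveredAvoiding, Finset.mem_filter, hrank, Nat.add_left_inj]
  constructor
  · rintro ⟨hF, hiF, hFG, rank_F⟩
    have ne_empty : F ≠ ∅ := by
      rintro rfl
      simp [M.rank_empty] at rank_F
    exact ⟨mem_link_of_ssubset hτ hG hF (F.empty_subset.ssubset_of_ne ne_empty.symm)
      (hFG.ssubset_of_ne fun h => hiF (h ▸ hi)), hiF, rank_F⟩
  · rintro ⟨hF, hiF, rank_F⟩
    refine ⟨isFlat_of_mem_link hτ hF, hiF, ?_, rank_F⟩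
    exact (ssubset_of_mem_link hτ hG hF (by simp [M.rank_empty, rank_F]) (by lia)).2.1

theorem mixedDegree_replicate_betaClass (hτ : M.IsFlag τ)
    (hcard : τ.card + k = M.rank Finset.univ + 1) (hG : IsConsecutive τ ∅ G) :
    M.bergmanFan.mixedDegree (List.replicate k (betaClass E)) τ =
      if M.rank G = k + 1 then M.unsignedMobius G else 0 := by
  induction k generalizing τ G with
  | zero =>
    have flat_G := hτ.isFlat G hG.right_mem
    have rank_G : M.rank G = 1 := by
      have rank_le := rank_le_of_isConsecutive hτ hcard hG
      have rank_lt := M.rank_lt_rank M.isFlat_empty flat_G hG.ssubset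
      rw [M.rank_empty] at rank_le rank_lt
      lia
    rw [if_pos rank_G, unsignedMobius_of_rank_eq_one flat_G rank_G]
    rfl
  | succ k ih =>
    obtain ⟨i, hi⟩ := Finset.empty_ssubset.1 hG.ssubset
    have degree_insert : ∀ F ∈ {F ∈ M.link τ | i ∉ F},
        M.bergmanFan.mixedDegree (List.replicate k (betaClass E)) (insert F τ) =
          if M.rank F = k + 1 then M.unsignedMobius F else 0 := by
      intro F hF
      obtain ⟨hF, hiF⟩ := Finset.mem_filter.1 hF
      obtain ⟨hFτ, hFlag⟩ := mem_linkVertices.1 hF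
      obtain ⟨empty_ssubset, hFG⟩ := ssubset_of_mem_link_of_notMem hτ hG hi hF hiF
      exact ih hFlag (by rw [Finset.card_insert_of_notMem hFτ]; lia)
        (hG.insert_left empty_ssubset hFG)
    rw [List.replicate_succ, mixedDegree_betaClass_cons hτ (by simp; lia) hG hi,
      Finset.sum_congr rfl degree_insert, ← Finset.sum_filter, Finset.filter_filter]
    have flat_G := hτ.isFlat G hG.right_mem
    split_ifs with hrank
    · rw [unsignedMobius_eq_sum_coveredAvoiding flat_G hi,
        coveredAvoiding_eq_filter_link hτ hG hi hrank]
    · refine Finset.sum_eq_zero fun F hF => ?_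
      obtain ⟨hF, hiF, rank_F⟩ := Finset.mem_filter.1 hF
      have rank_lt := M.rank_lt_rank (isFlat_of_mem_link hτ hF) flat_G
        (ssubset_of_mem_link_of_notMem hτ hG hi hF hiF).2
      have rank_le := rank_le_of_isConsecutive hτ hcard hG
      rw [M.rank_empty] at rank_le
      lia

theorem sum_filter_link_ite_rank_eq (hτ : M.IsFlag τ) (hH : IsConsecutive τ H Finset.univ)
    (hi : i ∉ H) {m : ℕ} (hm : m ≠ 0) (hrank : M.rank Finset.univ ≤ M.rank H + 1 + m) (x : ℝ) :
    ∑ F ∈ {F ∈ M.link τ | i ∈ F}, (if M.rank F + m = M.rank Finset.univ then x else 0) =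
      if M.rank H + 1 + m = M.rank Finset.univ then x else 0 := by
  have flat_H := hτ.isFlat H hH.left_mem
  split_ifs with rank_H
  · have rank_adjoin := rank_adjoin flat_H hi
    have adjoin_mem : M.adjoin i H ∈ {F ∈ M.link τ | i ∈ F} :=
      Finset.mem_filter.2 ⟨adjoin_mem_link hτ hH hi (by lia), mem_adjoin flat_H⟩
    rw [Finset.sum_eq_single_of_mem _ adjoin_mem, if_pos (by lia)]
    refine fun F hF hne => if_neg fun rank_F => hne ?_
    obtain ⟨hF, hiF⟩ := Finset.mem_filter.1 hF
    have flat_F := isFlat_of_mem_link hτ hF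
    have hHF := (ssubset_of_mem_link_of_mem hτ hH hi hF hiF).1
    exact (eq_of_subset_of_rank_le (isFlat_adjoin flat_H) flat_F
      (adjoin_subset flat_H flat_F hHF.1 hiF) (by lia)).symm
  · refine Finset.sum_eq_zero fun F hF => if_neg ?_
    obtain ⟨hF, hiF⟩ := Finset.mem_filter.1 hF
    have rank_lt := M.rank_lt_rank flat_H (isFlat_of_mem_link hτ hF)
      (ssubset_of_mem_link_of_mem hτ hH hi hF hiF).1
    lia

theorem mixedDegree_replicate_alphaClass_append (hτ : M.IsFlag τ)
    (hcard : τ.card + j + k = M.rank Finset.univ + 1) (hG : IsConsecutive τ ∅ G)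
    (hH : IsConsecutive τ H Finset.univ) (hGH : G ⊆ H) :
    M.bergmanFan.mixedDegree
        (List.replicate j (alphaClass E) ++ List.replicate k (betaClass E)) τ =
      if M.rank G = k + 1 ∧ M.rank H + j + 1 = M.rank Finset.univ then M.unsignedMobius G
      else 0 := by
  have rank_add_le := rank_add_rank_le_of_isConsecutive hτ (by rwa [← add_assoc]) hG hH hGH
  rw [M.rank_empty] at rank_add_le
  have flat_H := hτ.isFlat H hH.left_mem
  induction j generalizing τ H with
  | zero =>
    have rank_lt := M.rank_lt_rank flat_H M.isFlat_univ hH.ssubset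
    rw [List.replicate_zero, List.nil_append, mixedDegree_replicate_betaClass hτ hcard hG]
    refine if_congr (iff_self_and.2 fun rank_G => ?_) rfl rfl
    lia
  | succ j ih =>
    obtain ⟨i, -, hi⟩ := Finset.exists_of_ssubset hH.ssubset
    have degree_insert : ∀ F ∈ {F ∈ M.link τ | i ∈ F},
        M.bergmanFan.mixedDegree
            (List.replicate j (alphaClass E) ++ List.replicate k (betaClass E)) (insert F τ) =
          if M.rank G = k + 1 ∧ M.rank F + j + 1 = M.rank Finset.univ then M.unsignedMobius G
          else 0 := by
      intro F hF
      obtain ⟨hF, hiF⟩ := Finset.mem_filter.1 hF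
      obtain ⟨hFτ, hFlag⟩ := mem_linkVertices.1 hF
      obtain ⟨hHF, hF_univ⟩ := ssubset_of_mem_link_of_mem hτ hH hi hF hiF
      have := M.rank_lt_rank flat_H (isFlat_of_mem_link hτ hF) hHF
      exact ih hFlag (by rw [Finset.card_insert_of_notMem hFτ]; lia)
        (hG.insert_of_subset_or_subset (.inr (hGH.trans hHF.1))) (hH.insert_right hHF hF_univ)
        (hGH.trans hHF.1) (by lia) (isFlat_of_mem_link hτ hF)
    rw [List.replicate_succ, List.cons_append, mixedDegree_alphaClass_cons hτ (by simp; lia) hH hi,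
      Finset.sum_congr rfl degree_insert]
    by_cases rank_G : M.rank G = k + 1
    · simp only [rank_G, true_and]
      exact (sum_filter_link_ite_rank_eq hτ hH hi j.succ_ne_zero (by lia) _).trans
        (if_congr (by lia) rfl rfl)
    · simp only [rank_G, false_and, if_false, Finset.sum_const_zero]

end RankedFlats

/-! ### Whitney numbers -/

theorem mul_le_mul_of_mul_le_sq {a b c d : ℝ} (hb : 0 ≤ b) (hc : 0 < c) (hd : 0 ≤ d)
    (hac : a * c ≤ b ^ 2) (hbd : b * d ≤ c ^ 2) : a * d ≤ b * c := by
  refine le_of_mul_le_mul_right ?_ hc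
  calc a * d * c = a * c * d := by ring
    _ ≤ b ^ 2 * d := mul_le_mul_of_nonneg_right hac hd
    _ = b * (b * d) := by ring
    _ ≤ b * c ^ 2 := mul_le_mul_of_nonneg_left hbd hb
    _ = b * c * c := by ring

namespace RankedFlats

variable {E : Type*} [Fintype E] {M : RankedFlats E} {F : Finset E} {i : E} {j k : ℕ}

variable (M) in
open Classical in
/-- The flats of rank `k`. -/
noncomputable def flatsOfRank (k : ℕ) : Finset (Finset E) := {F | M.IsFlat F ∧ M.rank F = k}

theorem mem_flatsOfRank : F ∈ M.flatsOfRank k ↔ M.IsFlat F ∧ M.rank F = k := by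
  simp [flatsOfRank]

variable (M) in
/-- The absolute values `∑ |μ(∅, F)|`, over the flats `F` of rank `k`, of the Whitney numbers of the
first kind; they are the unsigned coefficients of the characteristic polynomial. -/
noncomputable def whitney (k : ℕ) : ℝ := ∑ F ∈ M.flatsOfRank k, M.unsignedMobius F

variable (M) in
open Classical in
/-- The part of `M.whitney k` that comes from the flats containing `i`. The value at `k + 1` is the
`k`-th unsigned coefficient of the reduced characteristic polynomial. -/
noncomputable def reducedWhitney (i : E) (k : ℕ) : ℝ :=
  ∑ F ∈ M.flatsOfRank k with i ∈ F, M.unsignedMobius F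

theorem whitney_nonneg (k : ℕ) : 0 ≤ M.whitney k :=
  Finset.sum_nonneg fun _ hF => (unsignedMobius_pos (mem_flatsOfRank.1 hF).1).le

theorem reducedWhitney_nonneg (i : E) (k : ℕ) : 0 ≤ M.reducedWhitney i k := by
  classical
  exact Finset.sum_nonneg fun _ hF =>
    (unsignedMobius_pos (mem_flatsOfRank.1 (Finset.mem_filter.1 hF).1).1).le

theorem reducedWhitney_zero (i : E) : M.reducedWhitney i 0 = 0 := by
  classical
  refine Finset.sum_eq_zero fun F hF => ?_
  rw [Finset.mem_filter, mem_flatsOfRank] at hF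
  obtain ⟨⟨hF, rank_F⟩, hi⟩ := hF
  rw [← eq_of_subset_of_rank_le M.isFlat_empty hF F.empty_subset (by lia)] at hi
  exact absurd hi (Finset.notMem_empty i)

theorem flatsOfRank_eq_empty (hk : M.rank Finset.univ < k) : M.flatsOfRank k = ∅ :=
  Finset.eq_empty_of_forall_notMem fun F hF => by
    obtain ⟨flat_F, rfl⟩ := mem_flatsOfRank.1 hF
    exact hk.not_ge (rank_le_rank_univ flat_F)

theorem reducedWhitney_eq_zero (i : E) (hk : M.rank Finset.univ < k) :
    M.reducedWhitney i k = 0 := by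
  rw [reducedWhitney, flatsOfRank_eq_empty hk, Finset.filter_empty, Finset.sum_empty]

theorem reducedWhitney_pos (i : E) (hk : k ≠ 0) (hkr : k ≤ M.rank Finset.univ) :
    0 < M.reducedWhitney i k := by
  classical
  refine Finset.sum_pos (fun _ hF =>
    unsignedMobius_pos (mem_flatsOfRank.1 (Finset.mem_filter.1 hF).1).1) ?_
  have rank_adjoin := rank_adjoin M.isFlat_empty (Finset.notMem_empty i)
  rw [M.rank_empty] at rank_adjoin
  obtain ⟨F, hF, rank_F, h, -⟩ := exists_isFlat_rank_eq (a := k) (isFlat_adjoin M.isFlat_empty)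
    M.isFlat_univ (Finset.subset_univ (M.adjoin i ∅)) (by lia) hkr
  exact ⟨F, Finset.mem_filter.2 ⟨mem_flatsOfRank.2 ⟨hF, rank_F⟩, h (mem_adjoin M.isFlat_empty)⟩⟩

open Classical in
theorem reducedWhitney_succ (i : E) (k : ℕ) :
    M.reducedWhitney i (k + 1) = ∑ F ∈ M.flatsOfRank k with i ∉ F, M.unsignedMobius F := by
  have maps_to : ∀ G ∈ {G ∈ M.flatsOfRank k | i ∉ G},
      M.adjoin i G ∈ {F ∈ M.flatsOfRank (k + 1) | i ∈ F} := by
    simp only [Finset.mem_filter, mem_flatsOfRank]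
    rintro G ⟨⟨hG, rfl⟩, hi⟩
    exact ⟨⟨isFlat_adjoin hG, rank_adjoin hG hi⟩, mem_adjoin hG⟩
  rw [reducedWhitney, ← Finset.sum_fiberwise_of_maps_to maps_to]
  refine Finset.sum_congr rfl fun F hF => ?_
  rw [Finset.mem_filter, mem_flatsOfRank] at hF
  obtain ⟨⟨hF, rank_F⟩, hi⟩ := hF
  rw [unsignedMobius_eq_sum_coveredAvoiding hF hi]
  congr 1
  ext G
  rw [mem_coveredAvoiding_iff_adjoin_eq hF hi, Finset.mem_filter, Finset.mem_filter,
    mem_flatsOfRank]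
  constructor
  · rintro ⟨hG, hiG, rfl⟩
    exact ⟨⟨⟨hG, Nat.succ_injective ((rank_adjoin hG hiG).symm.trans rank_F)⟩, hiG⟩, rfl⟩
  · rintro ⟨⟨⟨hG, -⟩, hiG⟩, heq⟩
    exact ⟨hG, hiG, heq⟩

theorem whitney_eq_add (i : E) (k : ℕ) :
    M.whitney k = M.reducedWhitney i k + M.reducedWhitney i (k + 1) := by
  classical
  rw [reducedWhitney_succ, reducedWhitney, whitney, Finset.sum_filter_add_sum_filter_not]

theorem isFlag_pair [DecidableEq E] : M.IsFlag {∅, Finset.univ} where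
  isFlat := by simp [M.isFlat_empty, M.isFlat_univ]
  isChain := by simpa using IsChain.pair (Finset.empty_subset _)
  empty_mem := by simp
  univ_mem := by simp

theorem isConsecutive_pair [DecidableEq E] [Nonempty E] :
    IsConsecutive {∅, Finset.univ} ∅ (Finset.univ : Finset E) where
  left_mem := by simp
  right_mem := by simp
  ssubset := Finset.empty_ssubset.2 Finset.univ_nonempty
  subset_or_subset := by simp

theorem card_pair_empty_univ [DecidableEq E] [Nonempty E] :
    ({∅, Finset.univ} : Finset (Finset E)).card = 2 :=
  Finset.card_pair isConsecutive_pair.ssubset.ne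

theorem mem_link_pair [DecidableEq E] :
    F ∈ M.link {∅, Finset.univ} ↔ M.IsFlat F ∧ F ≠ ∅ ∧ F ≠ Finset.univ := by
  simp [mem_link isFlag_pair, and_comm]

theorem flatsOfRank_rank_univ : M.flatsOfRank (M.rank Finset.univ) = {Finset.univ} := by
  ext F
  rw [mem_flatsOfRank, Finset.mem_singleton]
  constructor
  · rintro ⟨hF, rank_F⟩
    exact eq_of_subset_of_rank_le hF M.isFlat_univ F.subset_univ rank_F.ge
  · rintro rfl
    exact ⟨M.isFlat_univ, rfl⟩

open Classical in
theorem filter_link_pair_rank_eq (i : E) (hk : k < M.rank Finset.univ) :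
    {F ∈ M.link {∅, Finset.univ} | i ∈ F ∧ M.rank F = k} = {F ∈ M.flatsOfRank k | i ∈ F} := by
  ext F
  simp only [Finset.mem_filter, mem_flatsOfRank, mem_link_pair]
  constructor
  · rintro ⟨⟨hF, -⟩, hi, rank_F⟩
    exact ⟨⟨hF, rank_F⟩, hi⟩
  · rintro ⟨⟨hF, rank_F⟩, hi⟩
    refine ⟨⟨hF, Finset.ne_empty_of_mem hi, ?_⟩, hi, rank_F⟩
    rintro rfl
    exact hk.ne' rank_F

open Classical in
theorem mixedDegree_insert_pair (hF : F ∈ M.link {∅, Finset.univ}) (hi : i ∈ F)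
    (hjk : j + k + 2 = M.rank Finset.univ) :
    M.bergmanFan.mixedDegree
        (List.replicate j (alphaClass E) ++ List.replicate k (betaClass E))
        (insert F {∅, Finset.univ}) =
      if M.rank F = k + 1 then M.unsignedMobius F else 0 := by
  have : Nonempty E := ⟨i⟩
  have card_eq := card_pair_empty_univ (E := E)
  obtain ⟨hFτ, hFlag⟩ := mem_linkVertices.1 hF
  obtain ⟨empty_ssubset, ssubset_univ⟩ :=
    ssubset_of_mem_link_of_mem isFlag_pair isConsecutive_pair (Finset.notMem_empty i) hF hi
  rw [mixedDegree_replicate_alphaClass_append hFlag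
    (by rw [Finset.card_insert_of_notMem hFτ]; lia)
    (isConsecutive_pair.insert_left empty_ssubset ssubset_univ)
    (isConsecutive_pair.insert_right empty_ssubset ssubset_univ) subset_rfl]
  exact if_congr (and_iff_left_of_imp (by lia)) rfl rfl

open Classical in
theorem mixedDegree_eq_reducedWhitney (i : E)
    (hjk : j + k + 1 = M.rank Finset.univ) :
    M.bergmanFan.mixedDegree
        (List.replicate j (alphaClass E) ++ List.replicate k (betaClass E)) {∅, Finset.univ} =
      M.reducedWhitney i (k + 1) := by
  have : Nonempty E := ⟨i⟩
  have card_eq := card_pair_empty_univ (E := E)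
  cases j with
  | zero =>
    rw [List.replicate_zero, List.nil_append,
      mixedDegree_replicate_betaClass isFlag_pair (by lia) isConsecutive_pair, if_pos (by lia),
      reducedWhitney, show k + 1 = M.rank Finset.univ by lia, flatsOfRank_rank_univ,
      Finset.filter_true_of_mem (by simp), Finset.sum_singleton]
  | succ j =>
    have degree_insert : ∀ F ∈ {F ∈ M.link {∅, Finset.univ} | i ∈ F},
        M.bergmanFan.mixedDegree
            (List.replicate j (alphaClass E) ++ List.replicate k (betaClass E))
            (insert F {∅, Finset.univ}) =
          if M.rank F = k + 1 then M.unsignedMobius F else 0 := fun F hF =>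
      mixedDegree_insert_pair (Finset.mem_filter.1 hF).1 (Finset.mem_filter.1 hF).2 (by lia)
    rw [List.replicate_succ, List.cons_append, mixedDegree_alphaClass_cons isFlag_pair
      (by simp; lia) isConsecutive_pair (Finset.notMem_empty i),
      Finset.sum_congr rfl degree_insert, ← Finset.sum_filter, Finset.filter_filter,
      filter_link_pair_rank_eq i (by lia), reducedWhitney]

theorem reducedWhitney_succ_mul_le_sq (i : E) (hjk : j + k + 3 = M.rank Finset.univ) :
    M.reducedWhitney i (k + 1) * M.reducedWhitney i (k + 3) ≤ M.reducedWhitney i (k + 2) ^ 2 := by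
  classical
  have : Nonempty E := ⟨i⟩
  have card_eq := card_pair_empty_univ (E := E)
  have concave : ∀ t ∈ List.replicate j (alphaClass E) ++ List.replicate k (betaClass E),
      ConcaveOnChains t := by
    simp only [List.mem_append, List.mem_replicate]
    rintro t (⟨-, rfl⟩ | ⟨-, rfl⟩)
    exacts [concaveOnChains_alphaClass, concaveOnChains_betaClass]
  have mul_le := mixedDegree_mul_le_sq (M := M) concave isFlag_pair
    (by simp [card_eq]; lia) concaveOnChains_betaClass (alphaClass E)
  have degree_perm {us us' : List (Finset E → ℝ)} (hperm : us.Perm us')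
      (hlength : us.length + 2 = M.rank Finset.univ + 1) :
      M.bergmanFan.mixedDegree us {∅, Finset.univ} =
        M.bergmanFan.mixedDegree us' {∅, Finset.univ} :=
    BalancedFan.mixedDegree_perm hperm isFlag_pair (by rw [card_eq, add_comm]; exact hlength)
  rw [← mixedDegree_eq_reducedWhitney i (j := j + 2) (k := k) (by lia),
    ← mixedDegree_eq_reducedWhitney i (j := j + 1) (k := k + 1) (by lia),
    ← mixedDegree_eq_reducedWhitney i (j := j) (k := k + 2) (by lia),
    degree_perm (us := List.replicate j _ ++ List.replicate (k + 2) _)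
      (List.perm_middle.trans (List.perm_middle.cons _)) (by simp; lia),
    degree_perm (us := List.replicate (j + 1) _ ++ List.replicate (k + 1) _)
      (List.perm_middle.cons _) (by simp; lia)]
  exact mul_le

theorem reducedWhitney_mul_le_sq (i : E) (k : ℕ) :
    M.reducedWhitney i k * M.reducedWhitney i (k + 2) ≤ M.reducedWhitney i (k + 1) ^ 2 := by
  cases k with
  | zero =>
    rw [reducedWhitney_zero, zero_mul]
    exact sq_nonneg _
  | succ k =>
    obtain hk | hk := lt_or_ge (M.rank Finset.univ) (k + 3)
    · rw [reducedWhitney_eq_zero i hk, mul_zero]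
      exact sq_nonneg _
    · obtain ⟨j, hj⟩ := Nat.exists_eq_add_of_le' hk
      exact reducedWhitney_succ_mul_le_sq i (j := j) (by lia)

theorem reducedWhitney_mul_le_mul (i : E) (k : ℕ) :
    M.reducedWhitney i k * M.reducedWhitney i (k + 3) ≤
      M.reducedWhitney i (k + 1) * M.reducedWhitney i (k + 2) := by
  obtain hk | hk := lt_or_ge (M.rank Finset.univ) (k + 3)
  · rw [reducedWhitney_eq_zero i hk, mul_zero]
    exact mul_nonneg (reducedWhitney_nonneg i _) (reducedWhitney_nonneg i _)
  · exact mul_le_mul_of_mul_le_sq (reducedWhitney_nonneg i _)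
      (reducedWhitney_pos i (by lia) (by lia)) (reducedWhitney_nonneg i _)
      (reducedWhitney_mul_le_sq i k) (reducedWhitney_mul_le_sq i (k + 1))

theorem whitney_mul_le_sq (k : ℕ) : M.whitney k * M.whitney (k + 2) ≤ M.whitney (k + 1) ^ 2 := by
  obtain _ | ⟨⟨i⟩⟩ := isEmpty_or_nonempty E
  · have rank_univ : M.rank Finset.univ = 0 := by rw [Finset.univ_eq_empty, M.rank_empty]
    rw [whitney, whitney, flatsOfRank_eq_empty (k := k + 2) (by lia), Finset.sum_empty, mul_zero]
    exact sq_nonneg _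
  · simp only [whitney_eq_add i]
    linarith [reducedWhitney_mul_le_sq (M := M) i k, reducedWhitney_mul_le_sq (M := M) i (k + 1),
      reducedWhitney_mul_le_mul (M := M) i k]

end RankedFlats

/-! ### Graphic matroids -/

namespace GraphicMatroid

variable {V α : Type*} {G : SimpleGraph V} {F H : Finset G.Dart} {e : G.Dart} {f : V → α}

/-- A labelling `f` of the vertices is constant on `F` if no edge of `F` has ends with different
labels. The elements of the graphic matroid of `G` are its darts, so every edge occurs twice, as two
parallel elements; this affects neither the flats nor their ranks. -/
def IsConstOn (F : Finset G.Dart) (f : V → α) : Prop := ∀ e ∈ F, f e.fst = f e.snd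

theorem IsConstOn.mono (h : F ⊆ H) (hf : IsConstOn H f) : IsConstOn F f :=
  fun e he => hf e (h he)

/-- The connected components of the graph with vertex set `V` and edge set `F`. -/
def Component (F : Finset G.Dart) : Type _ := Quot fun v w => ∃ e ∈ F, e.fst = v ∧ e.snd = w

/-- The connected component of a vertex. -/
def component (F : Finset G.Dart) (v : V) : Component F := Quot.mk _ v

theorem component_surjective : Function.Surjective (component F) := Quot.mk_surjective

theorem isConstOn_component : IsConstOn F (component F) :=
  fun e he => Quot.sound ⟨e, he, rfl, rfl⟩

instance [Finite V] : Finite (Component F) := Finite.of_surjective _ component_surjective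

/-- Labellings that are constant on `F` are the same as labellings of the components. -/
def constLabellingsEquiv (F : Finset G.Dart) (α : Type*) :
    {f : V → α // IsConstOn F f} ≃ (Component F → α) where
  toFun f := Quot.lift f.1 <| by
    rintro _ _ ⟨e, he, rfl, rfl⟩
    exact f.2 e he
  invFun g := ⟨g ∘ component F, fun e he => congrArg g (isConstOn_component e he)⟩
  left_inv _ := rfl
  right_inv g := funext <| Quot.ind fun _ => rfl

theorem IsConstOn.eq_of_component_eq (hf : IsConstOn F f) {v w : V}
    (h : component F v = component F w) : f v = f w :=
  congrArg (constLabellingsEquiv F α ⟨f, hf⟩) h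

/-- The number of connected components of the graph with vertex set `V` and edge set `F`. -/
noncomputable def numComponents (F : Finset G.Dart) : ℕ := Nat.card (Component F)

theorem card_isConstOn [Finite V] (F : Finset G.Dart) (k : ℕ) :
    Nat.card {f : V → Fin k // IsConstOn F f} = k ^ numComponents F := by
  rw [Nat.card_congr (constLabellingsEquiv F (Fin k)), Nat.card_fun, Nat.card_fin, numComponents]

theorem component_empty_injective : Function.Injective (component (∅ : Finset G.Dart)) := by
  have isConstOn_id : IsConstOn (∅ : Finset G.Dart) (id : V → V) := by simp [IsConstOn]
  exact fun _ _ => isConstOn_id.eq_of_component_eq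

theorem numComponents_empty : numComponents (∅ : Finset G.Dart) = Nat.card V :=
  (Nat.card_eq_of_bijective _ ⟨component_empty_injective, component_surjective⟩).symm

theorem numComponents_le [Finite V] (F : Finset G.Dart) : numComponents F ≤ Nat.card V :=
  Nat.card_le_card_of_surjective _ component_surjective

theorem numComponents_le_of_subset [Finite V] (h : F ⊆ H) : numComponents H ≤ numComponents F := by
  refine Nat.card_le_card_of_surjective
    (constLabellingsEquiv F _ ⟨component H, isConstOn_component.mono h⟩) fun c => ?_
  obtain ⟨v, rfl⟩ := component_surjective c
  exact ⟨component F v, rfl⟩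

/- Adding `e` merges the components of its ends: the components of `insert e F` correspond to those
of `F` other than the component of `e.snd`. -/
theorem numComponents_insert_add_one_of_component_ne [Finite V] [DecidableEq G.Dart]
    (he : component F e.fst ≠ component F e.snd) :
    numComponents (insert e F) + 1 = numComponents F := by
  classical
  let merge (v : V) : {c : Component F // c ≠ component F e.snd} :=
    if h : component F v = component F e.snd then ⟨component F e.fst, he⟩ else ⟨component F v, h⟩
  have isConstOn_merge : IsConstOn (insert e F) merge := by
    intro e' he'
    obtain rfl | he' := Finset.mem_insert.1 he'
    · simp [merge]
    · simp only [merge, isConstOn_component e' he']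
  have isConstOn_insert : IsConstOn F (component (insert e F)) :=
    isConstOn_component.mono (Finset.subset_insert e F)
  let extend : Component F → Component (insert e F) :=
    constLabellingsEquiv F _ ⟨_, isConstOn_insert⟩
  have bijection : Component (insert e F) ≃ {c : Component F // c ≠ component F e.snd} :=
    { toFun := constLabellingsEquiv _ _ ⟨merge, isConstOn_merge⟩
      invFun := fun c => extend c
      left_inv := Quot.ind fun v => by
        change extend (merge v) = component (insert e F) v
        by_cases hv : component F v = component F e.snd
        · rw [show merge v = ⟨component F e.fst, he⟩ from dif_pos hv]
          exact (isConstOn_component e (Finset.mem_insert_self e F)).trans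
            (isConstOn_insert.eq_of_component_eq hv).symm
        · rw [show merge v = ⟨component F v, hv⟩ from dif_neg hv]
          rfl
      right_inv := by
        rintro ⟨c, hc⟩
        obtain ⟨v, rfl⟩ := component_surjective c
        exact dif_neg hc }
  rw [numComponents, numComponents, Nat.card_congr bijection, ← Finite.card_option,
    Nat.card_congr (Equiv.optionSubtypeNe _)]

section Closure

variable [Fintype G.Dart]

open Classical in
/-- The closure of `F` in the graphic matroid: the edges whose ends lie in the same component. -/
noncomputable def closure (F : Finset G.Dart) : Finset G.Dart :=
  {e | component F e.fst = component F e.snd}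

theorem mem_closure : e ∈ closure F ↔ component F e.fst = component F e.snd := by simp [closure]

theorem subset_closure (F : Finset G.Dart) : F ⊆ closure F :=
  fun e he => mem_closure.2 (isConstOn_component e he)

theorem isConstOn_closure : IsConstOn (closure F) f ↔ IsConstOn F f :=
  ⟨IsConstOn.mono (subset_closure F), fun hf _ he => hf.eq_of_component_eq (mem_closure.1 he)⟩

theorem closure_closure (F : Finset G.Dart) : closure (closure F) = closure F :=
  (subset_closure _).antisymm' fun _ he => mem_closure.2 <|
    (isConstOn_closure.2 isConstOn_component).eq_of_component_eq (mem_closure.1 he)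

theorem closure_mono (h : F ⊆ H) : closure F ⊆ closure H :=
  fun _ he => mem_closure.2 <|
    (isConstOn_component.mono h).eq_of_component_eq (mem_closure.1 he)

theorem numComponents_closure (F : Finset G.Dart) :
    numComponents (closure F) = numComponents F :=
  Nat.card_congr ⟨constLabellingsEquiv _ _ ⟨_, isConstOn_closure.2 isConstOn_component⟩,
    constLabellingsEquiv _ _ ⟨_, isConstOn_closure.1 isConstOn_component⟩,
    Quot.ind fun _ => rfl, Quot.ind fun _ => rfl⟩

open Classical in
variable (G) in
/-- The edges of `G` whose ends get the same label. -/
noncomputable def monochromatic (f : V → α) : Finset G.Dart := {e | f e.fst = f e.snd}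

theorem isConstOn_iff_subset_monochromatic : IsConstOn F f ↔ F ⊆ monochromatic G f := by
  simp [IsConstOn, monochromatic, Finset.subset_iff]

theorem monochromatic_eq_empty :
    monochromatic G f = ∅ ↔ ∀ v w, G.Adj v w → f v ≠ f w := by
  simp only [monochromatic, Finset.filter_eq_empty_iff, Finset.mem_univ, true_imp_iff]
  exact ⟨fun h v w hvw => h (x := ⟨(v, w), hvw⟩), fun h e => h _ _ e.adj⟩

variable [Finite V]

theorem numComponents_insert_add_one_of_notMem [DecidableEq G.Dart] (hF : closure F = F)
    (he : e ∉ F) : numComponents (insert e F) + 1 = numComponents F :=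
  numComponents_insert_add_one_of_component_ne (by rwa [Ne, ← mem_closure, hF])

variable (G) in
/-- The flats of the graphic matroid of `G`, ranked by the size of a spanning forest. -/
noncomputable def flats : RankedFlats G.Dart where
  IsFlat F := closure F = F
  rank F := Nat.card V - numComponents F
  isFlat_empty := Finset.eq_empty_of_forall_notMem fun e he =>
    e.adj.ne (component_empty_injective (mem_closure.1 he))
  isFlat_univ := Finset.eq_univ_of_forall fun e => subset_closure _ (Finset.mem_univ e)
  rank_empty := by rw [numComponents_empty, Nat.sub_self]
  rank_lt_rank {F H} hF _ h := by
    classical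
    obtain ⟨e, heH, heF⟩ := Finset.exists_of_ssubset h
    have card_insert := numComponents_insert_add_one_of_notMem hF heF
    have card_le := numComponents_le_of_subset (Finset.insert_subset heH h.1)
    have card_le_card := numComponents_le F
    lia
  exists_cover {F e} hF he := by
    classical
    have card_insert := numComponents_insert_add_one_of_notMem hF he
    have card_le_card := numComponents_le F
    refine ⟨closure (insert e F), closure_closure _, ?_, ?_, ?_, fun H hH hFH heH => ?_⟩
    · rw [numComponents_closure]
      lia
    · exact (Finset.subset_insert e F).trans (subset_closure _)
    · exact subset_closure _ (Finset.mem_insert_self e F)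
    · exact (closure_mono (Finset.insert_subset heH hFH)).trans hH.subset

theorem rank_flats (F : Finset G.Dart) : (flats G).rank F = Nat.card V - numComponents F := rfl

theorem isFlat_monochromatic (f : V → α) : (flats G).IsFlat (monochromatic G f) :=
  (subset_closure _).antisymm' <| isConstOn_iff_subset_monochromatic.1 <|
    isConstOn_closure.2 <| isConstOn_iff_subset_monochromatic.2 subset_rfl

end Closure

section ChromaticPolynomial

variable [Fintype V] [DecidableEq V] [DecidableRel G.Adj] {P : ℤ[X]} {j : ℕ}

open Classical in
/- Möbius inversion: sort the labellings by their flat of monochromatic edges. -/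
theorem numColorings_eq_sum_mobius (k : ℕ) :
    (G.numColorings k : ℤ) =
      ∑ F with (flats G).IsFlat F, (flats G).mobius F * (k : ℤ) ^ numComponents F := by
  have pow_eq (F : Finset G.Dart) : (k : ℤ) ^ numComponents F =
      ∑ f : V → Fin k, if F ⊆ monochromatic G f then 1 else 0 := by
    rw [← Nat.cast_pow, ← card_isConstOn, Nat.card_eq_fintype_card, Fintype.card_subtype,
      Finset.sum_boole]
    simp only [isConstOn_iff_subset_monochromatic]
  calc (G.numColorings k : ℤ)
      = ∑ f : V → Fin k, if monochromatic G f = ∅ then 1 else 0 := by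
        rw [SimpleGraph.numColorings, Fintype.card_subtype, Finset.sum_boole]
        simp only [monochromatic_eq_empty]
    _ = ∑ f : V → Fin k, ∑ F with (flats G).IsFlat F,
          (flats G).mobius F * if F ⊆ monochromatic G f then 1 else 0 := by
        refine Finset.sum_congr rfl fun f _ => ?_
        simp only [mul_ite, mul_one, mul_zero]
        rw [← Finset.sum_filter, Finset.filter_filter]
        convert (RankedFlats.sum_mobius (isFlat_monochromatic f)).symm
    _ = _ := by
        rw [Finset.sum_comm]
        simp only [pow_eq, Finset.mul_sum]

open Classical in
theorem eq_sum_mobius_mul_X_pow (hP : ∀ k : ℕ, P.eval (k : ℤ) = G.numColorings k) :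
    P = ∑ F with (flats G).IsFlat F, C ((flats G).mobius F) * X ^ numComponents F := by
  refine Polynomial.eq_of_infinite_eval_eq _ _ <|
    (Set.infinite_range_of_injective Nat.cast_injective).mono ?_
  rintro _ ⟨k, rfl⟩
  simp [hP, numColorings_eq_sum_mobius, eval_finsetSum]

theorem coeff_eq_neg_one_pow_mul_whitney
    (hP : ∀ k : ℕ, P.eval (k : ℤ) = G.numColorings k) (hj : j ≤ Fintype.card V) :
    (P.coeff (Fintype.card V - j) : ℝ) = (-1) ^ j * (flats G).whitney j := by
  classical
  rw [eq_sum_mobius_mul_X_pow hP, finsetSum_coeff, RankedFlats.whitney, RankedFlats.flatsOfRank,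
    Finset.mul_sum, ← Finset.filter_filter, Finset.sum_filter (p := fun F => (flats G).rank F = j)]
  push_cast
  refine Finset.sum_congr rfl fun F _ => ?_
  have coeff_iff : Fintype.card V - j = numComponents F ↔ (flats G).rank F = j := by
    have card_le := numComponents_le F
    rw [rank_flats]
    rw [Nat.card_eq_fintype_card] at *
    lia
  rw [coeff_C_mul_X_pow, if_congr coeff_iff rfl rfl]
  split_ifs with rank_F
  · rw [RankedFlats.unsignedMobius, rank_F, ← mul_assoc, ← mul_pow]
    simp
  · simp

theorem abs_coeff_eq_whitney (hP : ∀ k : ℕ, P.eval (k : ℤ) = G.numColorings k)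
    (hj : j ≤ Fintype.card V) :
    (|P.coeff (Fintype.card V - j)| : ℝ) = (flats G).whitney j := by
  rw [coeff_eq_neg_one_pow_mul_whitney hP hj, abs_mul, abs_neg_one_pow, one_mul,
    abs_of_nonneg (RankedFlats.whitney_nonneg j)]

end ChromaticPolynomial

end GraphicMatroid

/-- The absolute values of the coefficients of the chromatic polynomial of a finite
simple graph form a log-concave sequence: with `h_i = |c_{n−i}|`,
`h_{i−1} · h_{i+1} ≤ h_i²` for all `0 < i < n`. -/
theorem chromaticPolynomial_coeff_log_concave {V : Type*} [Fintype V] [DecidableEq V]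
    (G : SimpleGraph V) [DecidableRel G.Adj] (P : Polynomial ℤ)
    (hP : ∀ k : ℕ, P.eval (k : ℤ) = G.numColorings k) :
    ∀ i, 0 < i → i < Fintype.card V →
      |P.coeff (Fintype.card V - (i - 1))| * |P.coeff (Fintype.card V - (i + 1))| ≤
        |P.coeff (Fintype.card V - i)| ^ 2 := by
  intro i hi hin
  obtain ⟨k, rfl⟩ : ∃ k, i = k + 1 := Nat.exists_eq_add_of_le' hi
  have whitney_log_concave := RankedFlats.whitney_mul_le_sq (M := GraphicMatroid.flats G) k
  rw [← GraphicMatroid.abs_coeff_eq_whitney hP (by lia),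
    ← GraphicMatroid.abs_coeff_eq_whitney hP (by lia),
    ← GraphicMatroid.abs_coeff_eq_whitney hP (by lia)] at whitney_log_concave
  rw [Nat.add_sub_cancel]
  exact_mod_cast whitney_log_concave
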